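/- The reduced integral homology of the dominance complex D(P_n × P_3) is as follows. (1) For n = 6m (m ≥ 1): H̃_i ≅ Z^2 if i = 10m−1, Z^6 if 9m−1 < i < 10m−1, Z^5 if i = 9m−1, and 0 otherwise. (2) For n = 6m+1: H̃_i ≅ Z^6 if 9m < i ≤ 10m, Z if i = 9m, and 0 otherwise. (3) For n = 6m+2 with m ≥ 1: H̃_i ≅ Z^4 if i = 10m+2, Z^6 if 9m+2 < i < 10m+2, Z^5 if i = 9m+2, and 0 otherwise; for n = 2: H̃_i ≅ Z^3 if i = 2 and 0 otherwise. (4) For n = 6m+3: H̃_i ≅ Z^2 if i = 10m+4, Z^6 if 9m+3 < i < 10m+4, Z if i = 9m+3, and 0 otherwise. (5) For n = 6m+4: H̃_i ≅ Z^6 if 9m+5 < i ≤ 10m+5, Z^5 if i = 9m+5, and 0 otherwise. (6) For n = 6m+5: H̃_i ≅ Z^4 if i = 10m+7, Z^6 if 9m+6 < i < 10m+7, Z if i = 9m+6, and 0 otherwise. -/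

import Mathlib

open SimpleGraph

/-- An abstract simplicial complex on the underlying vertex set `V`. -/
structure Cplx (V : Type) where
  faces : Finset V → Prop
  down_closed : ∀ ⦃σ τ : Finset V⦄, σ ⊆ τ → faces τ → faces σ

/-- The dominance complex of a graph: the faces are the subsets of the vertex set
whose complement is a dominating set. -/
def domCpx {V : Type} [Fintype V] [DecidableEq V] (G : SimpleGraph V) : Cplx V where
  faces σ := ∀ v : V, ∃ w : V, w ∉ σ ∧ (w = v ∨ G.Adj w v)
  down_closed := by
    intro σ τ hst h v
    obtain ⟨w, hw, h2⟩ := h v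
    exact ⟨w, fun hc => hw (hst hc), h2⟩

section Homology

variable {V : Type} [DecidableEq V] (K : Cplx V) (R : Type) [CommRing R]

/-- The (possibly degenerate) ordered `n`-simplices of `K`. -/
def Smpx (n : ℕ) : Type := {f : Fin (n + 1) → V // K.faces (Finset.image f Finset.univ)}

/-- The `i`-th face of an ordered simplex. -/
def Smpx.face {n : ℕ} (f : Smpx K (n + 1)) (i : Fin (n + 2)) : Smpx K n :=
  ⟨f.1 ∘ Fin.succAbove i, by
    refine K.down_closed ?_ f.2
    intro x hx
    simp only [Finset.mem_image, Function.comp_apply] at hx ⊢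
    obtain ⟨j, _, hj⟩ := hx
    exact ⟨_, Finset.mem_univ _, hj⟩⟩

/-- The simplicial boundary operator on the free modules of chains. -/
noncomputable def bdry (n : ℕ) : (Smpx K (n + 1) →₀ R) →ₗ[R] (Smpx K n →₀ R) :=
  Finsupp.linearCombination R fun f =>
    ∑ i : Fin (n + 2), ((-1 : R) ^ (i : ℕ)) • Finsupp.single (Smpx.face K f i) (1 : R)

/-- The augmentation map, into the free module on the unique `(-1)`-simplex. -/
noncomputable def aug : (Smpx K 0 →₀ R) →ₗ[R] (Unit →₀ R) :=
  Finsupp.linearCombination R fun _ => Finsupp.single () (1 : R)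

/-- Cycles: the kernels of the boundary maps of the augmented chain complex. -/
noncomputable def cyc : (n : ℕ) → Submodule R (Smpx K n →₀ R)
  | 0 => LinearMap.ker (aug K R)
  | n + 1 => LinearMap.ker (bdry K R n)

/-- Boundaries, viewed inside the cycles. -/
noncomputable def bsub (n : ℕ) : Submodule R ↥(cyc K R n) :=
  Submodule.comap (cyc K R n).subtype (LinearMap.range (bdry K R n))

/-- The reduced simplicial homology of `K` with coefficients in `R`, defined via the
augmented chain complex of ordered simplices. -/
noncomputable def reducedHomology : ℤ → ModuleCat R
  | Int.ofNat n =>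
      ModuleCat.of R
        (@HasQuotient.Quotient ↥(cyc K R n) (Submodule R ↥(cyc K R n))
          (@Submodule.hasQuotient R ↥(cyc K R n) _ _ _) (bsub K R n))
  | Int.negSucc 0 => ModuleCat.of R ((Unit →₀ R) ⧸ LinearMap.range (aug K R))
  | Int.negSucc (_ + 1) => ModuleCat.of R PUnit

/-- The `R`-homological dimension of a simplicial complex:
the supremum of the degrees with nonvanishing reduced homology, in `ℤ ∪ {±∞}`. -/
noncomputable def hdim : EReal :=
  sSup {x : EReal | ∃ n : ℤ, x = ((n : ℝ) : EReal) ∧ Nontrivial (reducedHomology K R n)}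

/-- The `R`-homological connectivity of a simplicial complex:
the supremum of the `n` such that all reduced homology in degrees `≤ n` vanishes. -/
noncomputable def conn : EReal :=
  sSup {x : EReal | ∃ n : ℤ, x = ((n : ℝ) : EReal) ∧
    ∀ i : ℤ, i ≤ n → Subsingleton (reducedHomology K R i)}

end Homology

/-- The reduced integral homology of the dominance complex of `P_n × P_3`. -/
noncomputable abbrev Hdp (n : ℕ) (i : ℤ) : ModuleCat ℤ :=
  reducedHomology (domCpx ((pathGraph n).boxProd (pathGraph 3))) ℤ i

namespace OrderedHomology

open Polynomial

variable {V : Type}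

/-- Ordered chains on `V`; the index counts vertices, so it is the dimension plus one. -/
abbrev Chain (V : Type) (k : ℕ) : Type := (Fin k → V) →₀ ℤ

/-- The alternating sum of the faces of an ordered simplex. -/
noncomputable def faceSum {k : ℕ} (f : Fin (k + 1) → V) : Chain V k :=
  ∑ i : Fin (k + 1), ((-1 : ℤ) ^ (i : ℕ)) • Finsupp.single (f ∘ i.succAbove) (1 : ℤ)

/-- The boundary operator. -/
noncomputable def bd (k : ℕ) : Chain V (k + 1) →ₗ[ℤ] Chain V k :=
  Finsupp.linearCombination ℤ faceSum

/-- Prepending the vertex `x`. -/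
noncomputable def cone (x : V) (k : ℕ) : Chain V k →ₗ[ℤ] Chain V (k + 1) :=
  Finsupp.lmapDomain ℤ ℤ (fun f => (Fin.cons x f : Fin (k + 1) → V))

/-- The kernel of the boundary operator on chains with `k` vertices. -/
noncomputable def bdKer : (k : ℕ) → Submodule ℤ (Chain V k)
  | 0 => ⊤
  | k + 1 => LinearMap.ker (bd k)

open Classical in
/-- The part of a chain supported on simplices through `x`. -/
noncomputable def through (x : V) (k : ℕ) : Chain V k →ₗ[ℤ] Chain V k :=
  (Finsupp.supported ℤ ℤ {f : Fin k → V | x ∈ Set.range f}).subtype ∘ₗ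
    Finsupp.restrictDom ℤ ℤ {f : Fin k → V | x ∈ Set.range f}

@[simp] lemma bd_single {k : ℕ} (f : Fin (k + 1) → V) (a : ℤ) :
    bd k (Finsupp.single f a) = a • faceSum f := by
  simp [bd]

@[simp] lemma cone_single (x : V) {k : ℕ} (f : Fin k → V) (a : ℤ) :
    cone x k (Finsupp.single f a) = Finsupp.single (Fin.cons x f) a := by
  simp [cone]

lemma faceSum_cons_zero (x : V) (f : Fin 0 → V) :
    faceSum (Fin.cons x f : Fin 1 → V) = Finsupp.single f 1 := by
  rw [faceSum, Fin.sum_univ_succ]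
  simp [Subsingleton.elim _ f]

lemma faceSum_cons (x : V) {k : ℕ} (f : Fin (k + 1) → V) :
    faceSum (Fin.cons x f : Fin (k + 2) → V) =
      Finsupp.single f 1 - cone x k (faceSum f) := by
  rw [faceSum, Fin.sum_univ_succ, sub_eq_add_neg]
  congr 1
  · simp only [Fin.val_zero, pow_zero, one_smul]
    congr 1
  · rw [faceSum, map_sum, ← Finset.sum_neg_distrib]
    refine Finset.sum_congr rfl fun i _ => ?_
    rw [map_smul, cone_single, ← neg_smul]
    congr 1
    · simp [pow_succ]
    · congr 1
      funext j
      refine Fin.cases ?_ (fun j => ?_) j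
      · simp
      · simp [Fin.succ_succAbove_succ]

lemma bd_cone_zero (x : V) (c : Chain V 0) : bd 0 (cone x 0 c) = c := by
  induction c using Finsupp.induction_linear with
  | zero => simp
  | add f g hf hg => simp [hf, hg]
  | single f a => simp [faceSum_cons_zero]

lemma bd_cone_succ (x : V) {k : ℕ} (c : Chain V (k + 1)) :
    bd (k + 1) (cone x (k + 1) c) = c - cone x k (bd k c) := by
  induction c using Finsupp.induction_linear with
  | zero => simp
  | add f g hf hg => simp only [map_add, hf, hg]; abel
  | single f a => simp [faceSum_cons, smul_sub]

lemma bd_bd_succ {k : ℕ} (c : Chain V (k + 2)) : bd k (bd (k + 1) c) = 0 := by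
  induction k with
  | zero =>
    induction c using Finsupp.induction_linear with
    | zero => simp
    | add f g hf hg => simp [hf, hg]
    | single f a =>
      rw [← Fin.cons_self_tail f, bd_single, faceSum_cons, map_smul, map_sub, bd_cone_zero]
      simp
  | succ k ih =>
    induction c using Finsupp.induction_linear with
    | zero => simp
    | add f g hf hg => simp [hf, hg]
    | single f a =>
      rw [← Fin.cons_self_tail f, bd_single, faceSum_cons, map_smul, map_sub, bd_cone_succ,
        ← one_smul ℤ (faceSum (Fin.tail f)), ← bd_single, ih]
      simp

lemma bd_mem_bdKer (k : ℕ) (c : Chain V (k + 1)) :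
    bd k c ∈ (bdKer k : Submodule ℤ (Chain V k)) := by
  cases k with
  | zero => trivial
  | succ k => exact bd_bd_succ c

lemma bd_cone_of_mem_bdKer (x : V) {k : ℕ} {c : Chain V k} (hc : c ∈ bdKer k) :
    bd k (cone x k c) = c := by
  cases k with
  | zero => exact bd_cone_zero x c
  | succ k =>
    have h : bd k c = 0 := hc
    rw [bd_cone_succ, h]
    simp

/-- Chains of the simplicial complex `K`. -/
noncomputable def chains (K : LowerSet (Set V)) (k : ℕ) : Submodule ℤ (Chain V k) :=
  Finsupp.supported ℤ ℤ {f | Set.range f ∈ K}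

lemma mem_chains {K : LowerSet (Set V)} {k : ℕ} {c : Chain V k} :
    c ∈ chains K k ↔ ∀ f, c f ≠ 0 → Set.range f ∈ K := by
  rw [chains, Finsupp.mem_supported]
  simp [Set.subset_def]

lemma single_mem_chains {K : LowerSet (Set V)} {k : ℕ} {f : Fin k → V} (hf : Set.range f ∈ K)
    (a : ℤ) : Finsupp.single f a ∈ chains K k :=
  Finsupp.single_mem_supported ℤ a hf

lemma chains_mono {K L : LowerSet (Set V)} (h : K ≤ L) (k : ℕ) : chains K k ≤ chains L k :=
  Finsupp.supported_mono fun _ hf => h hf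

lemma chains_le {K : LowerSet (Set V)} {k : ℕ} {S : Submodule ℤ (Chain V k)}
    (h : ∀ f : Fin k → V, Set.range f ∈ K → Finsupp.single f 1 ∈ S) : chains K k ≤ S := by
  rw [chains, Finsupp.supported_eq_span_single, Submodule.span_le]
  rintro _ ⟨f, hf, rfl⟩
  exact h f hf

lemma faceSum_mem_chains {K : LowerSet (Set V)} {k : ℕ} {f : Fin (k + 1) → V}
    (hf : Set.range f ∈ K) : faceSum f ∈ chains K k :=
  Submodule.sum_mem _ fun _ _ => Submodule.smul_mem _ _ <|
    single_mem_chains (K.lower (Set.range_comp_subset_range _ _) hf) _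

lemma bd_mem_chains {K : LowerSet (Set V)} {k : ℕ} {c : Chain V (k + 1)}
    (hc : c ∈ chains K (k + 1)) : bd k c ∈ chains K k := by
  have : chains K (k + 1) ≤ (chains K k).comap (bd k) := chains_le fun f hf => by
    simpa using faceSum_mem_chains hf
  exact this hc

lemma cone_mem_chains {K L : LowerSet (Set V)} {x : V} (h : ∀ s ∈ L, insert x s ∈ K) {k : ℕ}
    {c : Chain V k} (hc : c ∈ chains L k) : cone x k c ∈ chains K (k + 1) := by
  have : chains L k ≤ (chains K (k + 1)).comap (cone x k) := chains_le fun f hf => by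
    simpa using single_mem_chains (by rw [Fin.range_cons]; exact h _ hf) _
  exact this hc

/-- Cycles of `K`. -/
noncomputable def cycles (K : LowerSet (Set V)) (k : ℕ) : Submodule ℤ (Chain V k) :=
  chains K k ⊓ bdKer k

/-- Boundaries of `K`. -/
noncomputable def bounds (K : LowerSet (Set V)) (k : ℕ) : Submodule ℤ (Chain V k) :=
  (chains K (k + 1)).map (bd k)

lemma cycles_mono {K L : LowerSet (Set V)} (h : K ≤ L) (k : ℕ) : cycles K k ≤ cycles L k :=
  inf_le_inf_right _ (chains_mono h k)

/-- Reduced homology of `K`; the index is the dimension plus one. -/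
abbrev Homol (K : LowerSet (Set V)) (k : ℕ) : Type :=
  cycles K k ⧸ (bounds K k).submoduleOf (cycles K k)

/-- The class of a cycle. -/
noncomputable def cls {K : LowerSet (Set V)} {k : ℕ} (z : cycles K k) : Homol K k :=
  Submodule.Quotient.mk z

lemma cls_eq_zero {K : LowerSet (Set V)} {k : ℕ} {z : cycles K k} :
    cls z = 0 ↔ ∃ c ∈ chains K (k + 1), bd k c = z := by
  rw [cls, Submodule.Quotient.mk_eq_zero]
  exact Iff.rfl

lemma cls_eq {K : LowerSet (Set V)} {k : ℕ} {z w : cycles K k} :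
    cls z = cls w ↔ ∃ c ∈ chains K (k + 1), bd k c = z - w := by
  rw [← sub_eq_zero]
  exact cls_eq_zero (z := z - w)

lemma cls_surjective {K : LowerSet (Set V)} {k : ℕ} (a : Homol K k) : ∃ z, cls z = a :=
  Submodule.Quotient.mk_surjective _ a

/-- The map on homology induced by a linear map of chains. -/
noncomputable def homMap {K L : LowerSet (Set V)} {k l : ℕ} (φ : Chain V k →ₗ[ℤ] Chain V l)
    (hZ : ∀ z ∈ cycles K k, φ z ∈ cycles L l)
    (hB : ∀ c ∈ chains K (k + 1), φ (bd k c) ∈ bounds L l) : Homol K k →ₗ[ℤ] Homol L l :=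
  Submodule.mapQ _ _ (φ.restrict hZ) (by
    rintro ⟨z, hz⟩ h
    obtain ⟨c, hc, rfl⟩ := h
    exact hB c hc)

/-- The map induced by an inclusion of complexes. -/
noncomputable def incl {K L : LowerSet (Set V)} (h : K ≤ L) (k : ℕ) : Homol K k →ₗ[ℤ] Homol L k :=
  homMap LinearMap.id (fun _ hz => cycles_mono h k hz)
    (fun c hc => ⟨c, chains_mono h _ hc, rfl⟩)

lemma incl_cls {K L : LowerSet (Set V)} (h : K ≤ L) {k : ℕ} (z : cycles K k) :
    incl h k (cls z) = cls ⟨z, cycles_mono h k z.2⟩ := rfl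

lemma incl_incl {K L M : LowerSet (Set V)} (h : K ≤ L) (h' : L ≤ M) {k : ℕ} (a : Homol K k) :
    incl h' k (incl h k a) = incl (h.trans h') k a := by
  obtain ⟨z, rfl⟩ := cls_surjective a
  rfl

/-- The link of `x`. -/
def link (K : LowerSet (Set V)) (x : V) : LowerSet (Set V) where
  carrier := {s | x ∉ s ∧ insert x s ∈ K}
  lower' _ _ hst h := ⟨fun hx => h.1 (hst hx), K.lower (Set.insert_subset_insert hst) h.2⟩

/-- The deletion of `x`. -/
def del (K : LowerSet (Set V)) (x : V) : LowerSet (Set V) where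
  carrier := {s | x ∉ s ∧ s ∈ K}
  lower' _ _ hst h := ⟨fun hx => h.1 (hst hx), K.lower hst h.2⟩

lemma mem_link {K : LowerSet (Set V)} {x : V} {s : Set V} :
    s ∈ link K x ↔ x ∉ s ∧ insert x s ∈ K := Iff.rfl

lemma mem_del {K : LowerSet (Set V)} {x : V} {s : Set V} :
    s ∈ del K x ↔ x ∉ s ∧ s ∈ K := Iff.rfl

lemma link_le_del (K : LowerSet (Set V)) (x : V) : link K x ≤ del K x :=
  fun _ h => ⟨h.1, K.lower (Set.subset_insert _ _) h.2⟩

lemma del_le (K : LowerSet (Set V)) (x : V) : del K x ≤ K := fun _ h => h.2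

lemma link_mono {K L : LowerSet (Set V)} (h : K ≤ L) (x : V) : link K x ≤ link L x :=
  fun _ hs => ⟨hs.1, h hs.2⟩

/-- The closed closedStar of `x`. -/
def closedStar (K : LowerSet (Set V)) (x : V) : LowerSet (Set V) where
  carrier := {s | insert x s ∈ K}
  lower' _ _ hst h := K.lower (Set.insert_subset_insert hst) h

open Classical in
lemma through_apply (x : V) {k : ℕ} (c : Chain V k) (f : Fin k → V) :
    through x k c f = if x ∈ Set.range f then c f else 0 := by
  simp [through, Finsupp.restrictDom_apply, Finsupp.filter_apply]

lemma through_mem_star {K : LowerSet (Set V)} (x : V) {k : ℕ} {c : Chain V k}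
    (hc : c ∈ chains K k) : through x k c ∈ chains (closedStar K x) k := by
  classical
  rw [mem_chains] at hc ⊢
  intro f hf
  rw [through_apply] at hf
  split_ifs at hf with hx
  · change insert x (Set.range f) ∈ K
    rw [Set.insert_eq_of_mem hx]
    exact hc f hf
  · exact absurd rfl hf

lemma sub_through_mem_del {K : LowerSet (Set V)} (x : V) {k : ℕ} {c : Chain V k}
    (hc : c ∈ chains K k) : c - through x k c ∈ chains (del K x) k := by
  classical
  rw [mem_chains] at hc ⊢
  intro f hf
  rw [Finsupp.sub_apply, through_apply] at hf
  split_ifs at hf with hx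
  · simp at hf
  · exact ⟨hx, hc f (by simpa using hf)⟩

lemma through_eq_zero {K : LowerSet (Set V)} {x : V} {k : ℕ} {c : Chain V k}
    (hc : c ∈ chains (del K x) k) : through x k c = 0 := by
  classical
  rw [mem_chains] at hc
  ext f
  rw [through_apply]
  split_ifs with hx
  · by_contra h
    exact (hc f h).1 hx
  · rfl

lemma mem_link_of_star_del {K : LowerSet (Set V)} {x : V} {k : ℕ} {c : Chain V k}
    (h₁ : c ∈ chains (closedStar K x) k) (h₂ : c ∈ chains (del K x) k) :
    c ∈ chains (link K x) k := by
  rw [mem_chains] at *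
  exact fun f hf => ⟨(h₂ f hf).1, h₁ f hf⟩

lemma through_cone (x : V) {k : ℕ} (c : Chain V k) :
    through x (k + 1) (cone x k c) = cone x k c := by
  classical
  ext f
  rw [through_apply]
  split_ifs with hx
  · rfl
  · symm
    by_contra h
    have : f ∈ (cone x k c).support := Finsupp.mem_support_iff.2 h
    obtain ⟨g, -, rfl⟩ := Finset.mem_image.1 (Finsupp.mapDomain_support this)
    exact hx ⟨0, rfl⟩

lemma bd_through_mem_link {K : LowerSet (Set V)} (x : V) {k : ℕ} {z : Chain V (k + 1)}
    (hz : z ∈ cycles K (k + 1)) : bd k (through x (k + 1) z) ∈ chains (link K x) k := by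
  refine mem_link_of_star_del (bd_mem_chains (through_mem_star x hz.1)) ?_
  have h : bd k z = 0 := hz.2
  have hdel := bd_mem_chains (sub_through_mem_del x hz.1)
  rw [map_sub, h, zero_sub] at hdel
  simpa using neg_mem hdel

/-- The connecting map. -/
noncomputable def connecting (K : LowerSet (Set V)) (x : V) (k : ℕ) :
    Homol K (k + 1) →ₗ[ℤ] Homol (link K x) k :=
  homMap (bd k ∘ₗ through x (k + 1))
    (fun z hz => ⟨bd_through_mem_link x hz, bd_mem_bdKer _ _⟩)
    (fun c hc => by
      refine ⟨through x (k + 1) (bd (k + 1) c) - bd (k + 1) (through x (k + 2) c), ?_, ?_⟩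
      · refine mem_link_of_star_del ?_ ?_
        · exact sub_mem (through_mem_star x (bd_mem_chains hc))
            (bd_mem_chains (through_mem_star x hc))
        · have h := sub_through_mem_del x (bd_mem_chains hc)
          have h' := bd_mem_chains (sub_through_mem_del x hc)
          rw [map_sub] at h'
          convert sub_mem h' h using 1
          abel
      · simp [bd_bd_succ])

lemma conn_cls (K : LowerSet (Set V)) (x : V) {k : ℕ} (z : cycles K (k + 1)) :
    connecting K x k (cls z) =
      cls ⟨bd k (through x (k + 1) z), bd_through_mem_link x z.2, bd_mem_bdKer _ _⟩ := rfl

lemma link_incl_conn {K L : LowerSet (Set V)} (h : K ≤ L) (x : V) {k : ℕ} (a : Homol K (k + 1)) :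
    connecting L x k (incl h (k + 1) a) = incl (link_mono h x) k (connecting K x k a) := by
  obtain ⟨z, rfl⟩ := cls_surjective a
  rfl

lemma exact_del (K : LowerSet (Set V)) (x : V) (k : ℕ) :
    Function.Exact (incl (link_le_del K x) k) (incl (del_le K x) k) := by
  intro a
  obtain ⟨z, rfl⟩ := cls_surjective a
  constructor
  · rw [incl_cls, cls_eq_zero]
    rintro ⟨c, hc, hz⟩
    have hz : bd k c = z := hz
    have e : (z : Chain V k) - bd k (c - through x (k + 1) c) = bd k (through x (k + 1) c) := by
      rw [map_sub, hz]; abel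
    refine ⟨cls ⟨bd k (through x (k + 1) c), ?_, bd_mem_bdKer _ _⟩, ?_⟩
    · refine mem_link_of_star_del (bd_mem_chains (through_mem_star x hc)) ?_
      rw [← e]
      exact sub_mem z.2.1 (bd_mem_chains (sub_through_mem_del x hc))
    · rw [incl_cls, cls_eq]
      refine ⟨-(c - through x (k + 1) c), neg_mem (sub_through_mem_del x hc), ?_⟩
      rw [map_neg]
      simp only [← e]
      abel
  · rintro ⟨b, hb⟩
    obtain ⟨w, rfl⟩ := cls_surjective b
    rw [← hb, incl_incl, incl_cls, cls_eq_zero]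
    exact ⟨cone x k w, cone_mem_chains (L := link K x) (fun s hs => hs.2) w.2.1,
      bd_cone_of_mem_bdKer x w.2.2⟩

lemma exact_conn (K : LowerSet (Set V)) (x : V) (k : ℕ) :
    Function.Exact (incl (del_le K x) (k + 1)) (connecting K x k) := by
  intro a
  obtain ⟨z, rfl⟩ := cls_surjective a
  constructor
  · rw [conn_cls, cls_eq_zero]
    rintro ⟨u, hu, hz⟩
    have hz : bd k u = bd k (through x (k + 1) z) := hz
    set t := through x (k + 1) (z : Chain V (k + 1)) with ht
    have hdz : bd k (z : Chain V (k + 1)) = 0 := z.2.2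
    have hK : bd k ((z : Chain V (k + 1)) - t + u) = 0 := by
      rw [map_add, map_sub, hdz, hz]; abel
    have htu : bd k (t - u) = 0 := by rw [map_sub, hz, sub_self]
    refine ⟨cls ⟨z - t + u, add_mem (sub_through_mem_del x z.2.1)
      (chains_mono (link_le_del K x) _ hu), hK⟩, ?_⟩
    rw [incl_cls, cls_eq]
    refine ⟨cone x (k + 1) (u - t), cone_mem_chains (L := closedStar K x) (fun s hs => hs)
      (sub_mem (chains_mono (K := link K x) (fun s hs => hs.2) _ hu)
        (through_mem_star x z.2.1)), ?_⟩
    rw [bd_cone_succ, map_sub, hz]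
    simp only [sub_self, map_zero, sub_zero]
    abel
  · rintro ⟨b, hb⟩
    obtain ⟨w, rfl⟩ := cls_surjective b
    rw [← hb, incl_cls, conn_cls, cls_eq_zero]
    exact ⟨0, zero_mem _, by simp [through_eq_zero w.2.1]⟩

lemma exact_link (K : LowerSet (Set V)) (x : V) (k : ℕ) :
    Function.Exact (connecting K x k) (incl (link_le_del K x) k) := by
  intro a
  obtain ⟨z, rfl⟩ := cls_surjective a
  constructor
  · rw [incl_cls, cls_eq_zero]
    rintro ⟨c, hc, hz⟩
    have hz : bd k c = z := hz
    have hcone := bd_cone_of_mem_bdKer x z.2.2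
    refine ⟨cls ⟨cone x k z - c, sub_mem (cone_mem_chains (L := link K x) (fun s hs => hs.2) z.2.1)
      (chains_mono (del_le K x) _ hc), ?_⟩, ?_⟩
    · change bd k _ = 0
      rw [map_sub, hcone, hz, sub_self]
    · rw [conn_cls]
      congr 1
      ext1
      simp only [map_sub, through_cone, through_eq_zero hc, hcone, sub_zero]
  · rintro ⟨b, hb⟩
    obtain ⟨w, rfl⟩ := cls_surjective b
    have hdw : bd k (w : Chain V (k + 1)) = 0 := w.2.2
    rw [← hb, conn_cls, incl_cls, cls_eq_zero]
    refine ⟨-(w - through x (k + 1) w), neg_mem (sub_through_mem_del x w.2.1), ?_⟩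
    rw [map_neg, map_sub, hdw]
    simp

lemma incl_del_zero_surjective (K : LowerSet (Set V)) (x : V) :
    Function.Surjective (incl (del_le K x) 0) := by
  intro a
  obtain ⟨z, rfl⟩ := cls_surjective a
  refine ⟨cls ⟨z, ?_, z.2.2⟩, rfl⟩
  have h := mem_chains.1 z.2.1
  refine mem_chains.2 fun f hf => ⟨?_, h f hf⟩
  rintro ⟨i, -⟩
  exact i.elim0

lemma free_of_exact {A B C : Type} [AddCommGroup A] [AddCommGroup B] [AddCommGroup C]
    [Module.Free ℤ A] [Module.Finite ℤ A] [Module.Free ℤ C] [Module.Finite ℤ C]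
    {f : A →ₗ[ℤ] B} {g : B →ₗ[ℤ] C} (hfg : Function.Exact f g) (hf : Function.Injective f)
    (hg : Function.Surjective g) :
    Module.Free ℤ B ∧ Module.Finite ℤ B ∧
      Module.finrank ℤ B = Module.finrank ℤ A + Module.finrank ℤ C := by
  obtain ⟨s, hs⟩ := Module.projective_lifting_property g LinearMap.id hg
  let e := (hfg.splitSurjectiveEquiv hf ⟨s, hs⟩).1
  exact ⟨Module.Free.of_equiv e.symm, Module.Finite.equiv e.symm, by
    rw [e.finrank_eq, Module.finrank_prod]⟩

lemma eq_zero_of_finrank_eq_add {A B C D : Type} [AddCommGroup A] [AddCommGroup B]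
    [AddCommGroup C] [AddCommGroup D] [Module.Free ℤ B] [Module.Finite ℤ B]
    [Module.Finite ℤ C] [Module.Finite ℤ D]
    {u : A →ₗ[ℤ] B} {v : B →ₗ[ℤ] C} {w : C →ₗ[ℤ] D} (huv : Function.Exact u v)
    (hvw : Function.Exact v w)
    (h : Module.finrank ℤ C = Module.finrank ℤ B + Module.finrank ℤ D) : u = 0 := by
  have hr : ∀ {M N : Type} [AddCommGroup M] [AddCommGroup N] [Module.Finite ℤ M]
      (f : M →ₗ[ℤ] N), Module.finrank ℤ (LinearMap.range f) + Module.finrank ℤ (LinearMap.ker f) =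
        Module.finrank ℤ M := fun f => by
    rw [← f.quotKerEquivRange.finrank_eq, Submodule.finrank_quotient_add_finrank]
  have h₁ := hr v
  have h₂ := hr w
  have h₃ : Module.finrank ℤ (LinearMap.range w) ≤ Module.finrank ℤ D := Submodule.finrank_le _
  rw [hvw.linearMap_ker_eq] at h₂
  rw [huv.linearMap_ker_eq] at h₁
  have h₄ : Module.finrank ℤ (LinearMap.range u) = 0 := by omega
  rw [← LinearMap.range_eq_bot]
  exact Submodule.finrank_eq_zero.1 h₄

/-- The homology of `K` is free of finite rank, with Poincaré polynomial `p`. -/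
def HasPoly (K : LowerSet (Set V)) (p : ℕ[X]) : Prop :=
  ∀ k, Module.Free ℤ (Homol K k) ∧ Module.Finite ℤ (Homol K k) ∧
    Module.finrank ℤ (Homol K k) = p.coeff k

lemma HasPoly.subsingleton {K : LowerSet (Set V)} {p : ℕ[X]} (h : HasPoly K p) {k : ℕ}
    (hk : p.coeff k = 0) : Subsingleton (Homol K k) := by
  obtain ⟨h₁, h₂, h₃⟩ := h k
  rw [hk] at h₃
  exact Module.finrank_zero_iff.1 h₃

lemma hasPoly_zero {K : LowerSet (Set V)} (h : ∀ k, Subsingleton (Homol K k)) : HasPoly K 0 :=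
  fun k => by
    have := h k
    exact ⟨inferInstance, inferInstance, by simp [Module.finrank_zero_of_subsingleton]⟩

lemma hasPoly_zero_of_cone {K : LowerSet (Set V)} {x : V} (h : ∀ s ∈ K, insert x s ∈ K) :
    HasPoly K 0 :=
  hasPoly_zero fun k => subsingleton_of_forall_eq 0 fun a => by
    obtain ⟨z, rfl⟩ := cls_surjective a
    exact cls_eq_zero.2 ⟨cone x k z, cone_mem_chains h z.2.1, bd_cone_of_mem_bdKer x z.2.2⟩

lemma hasPoly_one {K : LowerSet (Set V)} (h : ∀ s, s ∈ K ↔ s = ∅) : HasPoly K 1 := by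
  have hc : ∀ k, chains K (k + 1) = ⊥ := fun k => by
    refine le_antisymm (chains_le fun f hf => ?_) bot_le
    rw [h] at hf
    exact absurd (Set.mem_range_self (f := f) 0) (by simp [hf])
  intro k
  cases k with
  | zero =>
    have ht : cycles K 0 = ⊤ := by
      rw [cycles, eq_top_iff]
      refine fun c _ => ⟨mem_chains.2 fun f _ => ?_, trivial⟩
      rw [h]
      exact Set.range_eq_empty f
    have hb : (bounds K 0).submoduleOf (cycles K 0) = ⊥ := by
      rw [bounds, hc 0, Submodule.map_bot, Submodule.submoduleOf, Submodule.comap_bot]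
      exact Submodule.ker_subtype _
    let e : Homol K 0 ≃ₗ[ℤ] ℤ :=
      (Submodule.quotEquivOfEqBot _ hb).trans <| (LinearEquiv.ofTop _ ht).trans
        (Finsupp.uniqueLinearEquiv ℤ ℤ (default : Fin 0 → V))
    exact ⟨Module.Free.of_equiv e.symm, Module.Finite.equiv e.symm, by
      rw [e.finrank_eq]; simp⟩
  | succ k =>
    have : Subsingleton (Homol K (k + 1)) := subsingleton_of_forall_eq 0 fun a => by
      obtain ⟨z, rfl⟩ := cls_surjective a
      have hz : (z : Chain V (k + 1)) ∈ chains K (k + 1) := z.2.1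
      rw [hc k, Submodule.mem_bot] at hz
      exact cls_eq_zero.2 ⟨0, zero_mem _, by rw [hz, map_zero]⟩
    exact ⟨inferInstance, inferInstance, by
      simp [Polynomial.coeff_one, Module.finrank_zero_of_subsingleton]⟩

section Split

variable {K L D : LowerSet (Set V)} {x : V} {a c p q : ℕ[X]}

lemma link_le_del_of_eq (hL : link K x = L) (hD : del K x = D) : L ≤ D :=
  hL ▸ hD ▸ link_le_del K x

lemma del_le_of_eq (hD : del K x = D) : D ≤ K := hD ▸ del_le K x

lemma HasPoly.split (hL : link K x = L) (hD : del K x = D) (ha : HasPoly L a) (hc : HasPoly D c)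
    (h₀ : ∀ k, incl (link_le_del_of_eq hL hD) k = 0) : HasPoly K (c + X * a) := by
  subst hL hD
  have hinj : ∀ k, Function.Injective (incl (del_le K x) k) := fun k => by
    rw [← LinearMap.ker_eq_bot, (exact_del K x k).linearMap_ker_eq, LinearMap.range_eq_bot]
    exact h₀ k
  intro k
  obtain ⟨_, _, hk⟩ := hc k
  cases k with
  | zero =>
    let e := LinearEquiv.ofBijective _ ⟨hinj 0, incl_del_zero_surjective K x⟩
    refine ⟨Module.Free.of_equiv e, Module.Finite.equiv e, ?_⟩
    rw [← e.finrank_eq, hk]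
    simp
  | succ k =>
    obtain ⟨_, _, hk'⟩ := ha k
    have hsurj : Function.Surjective (connecting K x k) := by
      rw [← LinearMap.range_eq_top, ← (exact_link K x k).linearMap_ker_eq, LinearMap.ker_eq_top]
      exact h₀ k
    have h := free_of_exact (exact_conn K x k) (hinj (k + 1)) hsurj
    rw [hk, hk'] at h
    simpa using h

lemma HasPoly.of_link (hL : link K x = L) (hD : del K x = D) (hc : HasPoly D 0)
    (ha : HasPoly L a) : HasPoly K (X * a) := by
  rw [← zero_add (X * a)]
  refine HasPoly.split hL hD ha hc fun k => ?_
  have := hc.subsingleton (k := k) rfl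
  exact LinearMap.ext fun _ => Subsingleton.elim _ _

lemma HasPoly.of_del (hL : link K x = L) (hD : del K x = D) (ha : HasPoly L 0)
    (hc : HasPoly D c) : HasPoly K c := by
  rw [← add_zero c, ← mul_zero X]
  refine HasPoly.split hL hD ha hc fun k => ?_
  have := ha.subsingleton (k := k) rfl
  exact LinearMap.ext fun y => by rw [Subsingleton.elim y 0, map_zero, map_zero]

lemma incl_eq_zero_of_disjoint (h : L ≤ D) (ha : HasPoly L a) (hc : HasPoly D c) {k : ℕ}
    (hk : a.coeff k = 0 ∨ c.coeff k = 0) : incl h k = 0 := by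
  rcases hk with hk | hk
  · have := ha.subsingleton hk
    exact LinearMap.ext fun y => by rw [Subsingleton.elim y 0, map_zero, map_zero]
  · have := hc.subsingleton hk
    exact LinearMap.ext fun _ => Subsingleton.elim _ _

lemma incl_link_eq_zero (hL : link K x = L) (hD : del K x = D) (ha : HasPoly L a)
    (hc : HasPoly D c) (hK : HasPoly K (c + X * a)) (k : ℕ) :
    incl (link_le_del_of_eq hL hD) k = 0 := by
  subst hL hD
  obtain ⟨_, _, h₁⟩ := hc k
  obtain ⟨_, _, h₂⟩ := hK k
  cases k with
  | zero =>
    refine eq_zero_of_finrank_eq_add (D := PUnit) (w := 0) (exact_del K x 0) ?_ ?_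
    · intro y
      simpa using incl_del_zero_surjective K x y
    · rw [h₁, h₂, Module.finrank_zero_of_subsingleton]
      simp
  | succ k =>
    obtain ⟨_, _, h₃⟩ := ha k
    refine eq_zero_of_finrank_eq_add (exact_del K x _) (exact_conn K x k) ?_
    rw [h₁, h₂, h₃]
    simp

lemma connecting_eq_zero (hL : link K x = L) (hD : del K x = D) (ha : HasPoly L a)
    (hK : HasPoly K p) (hc : HasPoly D (a + p)) (k : ℕ) : connecting K x k = 0 := by
  subst hL hD
  obtain ⟨_, _, h₁⟩ := ha k
  obtain ⟨_, _, h₂⟩ := hc k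
  obtain ⟨_, _, h₃⟩ := hK k
  refine eq_zero_of_finrank_eq_add (exact_link K x k) (exact_del K x k) ?_
  rw [h₁, h₂, h₃, coeff_add]

lemma HasPoly.link_of_incl_eq_zero (hL : link K x = L) (hD : del K x = D) (hp : HasPoly D p)
    (hK : HasPoly K (X * q)) (h₀ : ∀ k, incl (del_le_of_eq hD) k = 0) : HasPoly L (q + p) := by
  subst hL hD
  intro k
  obtain ⟨_, _, h₁⟩ := hp k
  obtain ⟨_, _, h₂⟩ := hK (k + 1)
  have hinj : Function.Injective (connecting K x k) := by
    rw [← LinearMap.ker_eq_bot, (exact_conn K x k).linearMap_ker_eq, LinearMap.range_eq_bot]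
    exact h₀ (k + 1)
  have hsurj : Function.Surjective (incl (link_le_del K x) k) := by
    rw [← LinearMap.range_eq_top, ← (exact_del K x k).linearMap_ker_eq, LinearMap.ker_eq_top]
    exact h₀ k
  have h := free_of_exact (exact_link K x k) hinj hsurj
  rw [h₁, h₂] at h
  simpa using h

lemma incl_eq_zero_of_connecting {P : LowerSet (Set V)} (h : P ≤ K)
    (hD : HasPoly (del K x) 0) (hK : HasPoly K (X * q)) (h₀ : ∀ k, connecting P x k = 0) (k : ℕ) :
    incl h k = 0 := by
  refine LinearMap.ext fun y => ?_
  cases k with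
  | zero =>
    have := hK.subsingleton (k := 0) (by simp)
    exact Subsingleton.elim _ _
  | succ k =>
    have hy : connecting K x k (incl h (k + 1) y) = 0 := by
      rw [link_incl_conn h x y, h₀ k, LinearMap.zero_apply, map_zero]
    obtain ⟨w, hw⟩ := (exact_conn K x k _).1 hy
    have := hD.subsingleton (k := k + 1) rfl
    rw [← hw, Subsingleton.elim w 0, map_zero, LinearMap.zero_apply]

end Split

/-- The complex of all `s ⊆ A` such that every `y ∈ B` has a neighbour in `A \ s`. -/
def cover (R : V → V → Prop) (A B : Set V) : LowerSet (Set V) where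
  carrier := {s | s ⊆ A ∧ ∀ y ∈ B, ∃ x ∈ A, R x y ∧ x ∉ s}
  lower' _ _ hst h := ⟨hst.trans h.1, fun y hy =>
    let ⟨x, hx, hxy, hxs⟩ := h.2 y hy
    ⟨x, hx, hxy, fun hc => hxs (hst hc)⟩⟩

section Cover

variable {R : V → V → Prop} {A B : Set V} {x y : V} {a c m p q t : ℕ[X]}

lemma mem_cover {s : Set V} :
    s ∈ cover R A B ↔ s ⊆ A ∧ ∀ y ∈ B, ∃ x ∈ A, R x y ∧ x ∉ s := Iff.rfl

lemma cover_anti (A : Set V) {B' : Set V} (h : B' ⊆ B) : cover R A B ≤ cover R A B' :=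
  fun _ hs => ⟨hs.1, fun y hy => hs.2 y (h hy)⟩

lemma link_cover (hx : x ∈ A) (B : Set V) : link (cover R A B) x = cover R (A \ {x}) B := by
  ext s
  simp only [SetLike.mem_coe, mem_link, mem_cover, Set.mem_sdiff, Set.mem_singleton_iff,
    Set.mem_insert_iff, Set.insert_subset_iff, Set.subset_sdiff, Set.disjoint_singleton_right, hx]
  grind

lemma del_cover (hx : x ∈ A) (B : Set V) :
    del (cover R A B) x = cover R (A \ {x}) (B \ {y | R x y}) := by
  ext s
  simp only [SetLike.mem_coe, mem_del, mem_cover, Set.mem_sdiff, Set.mem_singleton_iff,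
    Set.subset_sdiff, Set.disjoint_singleton_right, Set.mem_ofPred_eq]
  grind

lemma hasPoly_cover_of_isolated_left (hx : x ∈ A) (h : ∀ y ∈ B, ¬ R x y) :
    HasPoly (cover R A B) 0 := by
  refine hasPoly_zero_of_cone (x := x) fun s hs => ⟨Set.insert_subset hx hs.1, fun y hy => ?_⟩
  obtain ⟨w, hw, hwy, hws⟩ := hs.2 y hy
  refine ⟨w, hw, hwy, fun hc => hc.elim (fun e => h y hy (e ▸ hwy)) hws⟩

lemma hasPoly_cover_of_isolated_right (hy : y ∈ B) (h : ∀ x ∈ A, ¬ R x y) :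
    HasPoly (cover R A B) 0 :=
  hasPoly_zero_of_cone (x := y) fun s hs => by
    obtain ⟨w, hw, hwy, -⟩ := hs.2 y hy
    exact absurd hwy (h w hw)

lemma hasPoly_cover_empty : HasPoly (cover R (∅ : Set V) ∅) 1 :=
  hasPoly_one fun s => by simp [mem_cover]

lemma hasPoly_cover_of_disjoint (hx : x ∈ A) (ha : HasPoly (cover R (A \ {x}) B) a)
    (hc : HasPoly (cover R (A \ {x}) (B \ {y | R x y})) c)
    (h : ∀ k, a.coeff k = 0 ∨ c.coeff k = 0) : HasPoly (cover R A B) (c + X * a) :=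
  HasPoly.split (link_cover hx B) (del_cover hx B) ha hc
    fun k => incl_eq_zero_of_disjoint _ ha hc (h k)

/-- If the decomposition at `x` is additive after shrinking `B` to `B'` without losing
non-neighbours of `x`, then it is additive for `B` as well. -/
lemma hasPoly_cover_of_shrink {B' : Set V} (hx : x ∈ A) (hB : B' ⊆ B)
    (hB' : B \ {y | R x y} ⊆ B') (ha : HasPoly (cover R (A \ {x}) B) a)
    (hc : HasPoly (cover R (A \ {x}) (B \ {y | R x y})) c)
    (hm : HasPoly (cover R (A \ {x}) B') m) (hK : HasPoly (cover R A B') (c + X * m)) :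
    HasPoly (cover R A B) (c + X * a) := by
  have e : B' \ {y | R x y} = B \ {y | R x y} :=
    Set.Subset.antisymm (Set.sdiff_subset_sdiff_left hB) fun z hz => ⟨hB' hz, hz.2⟩
  have hD := del_cover (R := R) hx B'
  rw [e] at hD
  refine HasPoly.split (link_cover hx B) (del_cover hx B) ha hc fun k => LinearMap.ext fun z => ?_
  rw [← incl_incl (cover_anti _ hB) (link_le_del_of_eq (link_cover hx B') hD),
    incl_link_eq_zero (link_cover hx B') hD hm hc hK]
  rfl

/-- The relation `R` with the neighbourhood of `o` replaced by `{y}`. -/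
def pendant (R : V → V → Prop) (o y : V) (x z : V) : Prop :=
  (x = o ∧ z = y) ∨ (x ≠ o ∧ R x z)

variable {o : V}

lemma cover_pendant (ho : o ∉ A) (B : Set V) : cover (pendant R o y) A B = cover R A B := by
  ext s
  simp only [SetLike.mem_coe, mem_cover, pendant]
  grind

lemma link_pendant (ho : o ∉ A) (B : Set V) :
    link (cover (pendant R o y) (insert o A) B) o = cover R A B := by
  rw [link_cover (Set.mem_insert o A), Set.insert_sdiff_self_of_notMem ho, cover_pendant ho]

lemma del_pendant (ho : o ∉ A) (B : Set V) :
    del (cover (pendant R o y) (insert o A) B) o = cover R A (B \ {y}) := by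
  rw [del_cover (Set.mem_insert o A), Set.insert_sdiff_self_of_notMem ho, cover_pendant ho]
  congr 2
  ext z
  simp [pendant]

lemma hasPoly_del_pendant (ho : o ∉ A) (hx : x ∈ A) (hxy : R x y) :
    HasPoly (del (cover (pendant R o y) (insert o A) B) x) 0 := by
  have hxo : x ≠ o := fun e => ho (e ▸ hx)
  rw [del_cover (Set.mem_insert_of_mem o hx)]
  refine hasPoly_cover_of_isolated_left (x := o) ⟨Set.mem_insert o A, hxo.symm⟩ fun z hz hoz => ?_
  have hzy : z = y := by simpa [pendant] using hoz
  subst hzy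
  exact hz.2 (Or.inr ⟨hxo, hxy⟩)

lemma hasPoly_pendant (ho : o ∉ A) (hy : y ∈ B) {S : Finset V}
    (hS : ∀ x, x ∈ S ↔ x ∈ A ∧ R x y) (ht : HasPoly (cover R (A \ {x | R x y}) (B \ {y})) t) :
    HasPoly (cover (pendant R o y) (insert o A) B) (X ^ S.card * t) := by
  classical
  induction S using Finset.induction_on generalizing A with
  | empty =>
    have hA : ∀ x ∈ A, ¬ R x y := fun x hx hxy => by simpa using (hS x).2 ⟨hx, hxy⟩
    have e : A \ {x | R x y} = A := by
      ext x; simpa using hA x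
    rw [e] at ht
    rw [Finset.card_empty, pow_zero, one_mul]
    exact HasPoly.of_del (link_pendant ho B) (del_pendant ho B)
      (hasPoly_cover_of_isolated_right hy hA) ht
  | insert x S hxS ih =>
    obtain ⟨hx, hxy⟩ := (hS x).1 (Finset.mem_insert_self x S)
    have hxo : o ≠ x := fun e => ho (e ▸ hx)
    rw [Finset.card_insert_of_notMem hxS, pow_succ', mul_assoc]
    refine HasPoly.of_link (x := x) (L := cover (pendant R o y) (insert o (A \ {x})) B) ?_ rfl
      (hasPoly_del_pendant ho hx hxy) (ih (fun h => ho h.1) ?_ ?_)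
    · rw [link_cover (Set.mem_insert_of_mem o hx), Set.insert_sdiff_of_notMem]
      exact hxo
    · intro z
      have := hS z
      simp only [Finset.mem_insert, Set.mem_sdiff, Set.mem_singleton_iff] at this ⊢
      grind
    · convert ht using 2
      ext z
      simp only [Set.mem_sdiff, Set.mem_singleton_iff, Set.mem_ofPred_eq]
      grind

lemma hasPoly_cover_erase (ho : o ∉ A) (hy : y ∈ B) {S : Finset V}
    (hS : ∀ x, x ∈ S ↔ x ∈ A ∧ R x y) (ht : HasPoly (cover R (A \ {x | R x y}) (B \ {y})) 0)
    (hp : HasPoly (cover R A (B \ {y})) p) : HasPoly (cover R A B) p := by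
  have hM := hasPoly_pendant ho hy hS ht
  rw [mul_zero, ← mul_zero X] at hM
  rw [← zero_add p]
  refine HasPoly.link_of_incl_eq_zero (link_pendant ho B) (del_pendant ho B) hp hM fun k => ?_
  have := hM.subsingleton (k := k) (by simp)
  exact LinearMap.ext fun _ => Subsingleton.elim _ _

lemma hasPoly_cover_of_erase_acyclic (ho : o ∉ A) (hy : y ∈ B) {S : Finset V}
    (hS : ∀ x, x ∈ S ↔ x ∈ A ∧ R x y) {n : ℕ} (hn : S.card = n + 1)
    (ht : HasPoly (cover R (A \ {x | R x y}) (B \ {y})) t)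
    (hp : HasPoly (cover R A (B \ {y})) 0) : HasPoly (cover R A B) (X ^ n * t) := by
  have hM := hasPoly_pendant ho hy hS ht
  rw [hn, pow_succ', mul_assoc] at hM
  rw [← add_zero (X ^ n * t)]
  refine HasPoly.link_of_incl_eq_zero (link_pendant ho B) (del_pendant ho B) hp hM fun k => ?_
  have := hp.subsingleton (k := k) rfl
  exact LinearMap.ext fun z => by rw [Subsingleton.elim z 0, map_zero, map_zero]

/-- Decomposition at `x`, where additivity is certified by erasing a neighbour `y` of `x`. -/
lemma hasPoly_cover_split_left (ho : o ∉ A) (hx : x ∈ A) (hy : y ∈ B) (hxy : R x y) {S : Finset V}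
    (hS : ∀ z, z ∈ S ↔ z ∈ A \ {x} ∧ R z y) (hp : HasPoly (cover R (A \ {x}) B) p)
    (hq : HasPoly (cover R (A \ {x}) (B \ {z | R x z})) q)
    (hm : HasPoly (cover R (A \ {x}) (B \ {y})) m)
    (ht : HasPoly (cover R ((A \ {x}) \ {z | R z y}) (B \ {y})) t)
    (e : X ^ S.card * t = m + X * p) : HasPoly (cover R A B) (q + X * p) := by
  have ho' : o ∉ A \ {x} := fun h => ho h.1
  have hM := hasPoly_pendant ho' hy hS ht
  rw [e] at hM
  refine HasPoly.split (link_cover hx B) (del_cover hx B) hp hq fun k => LinearMap.ext fun z => ?_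
  have h₁ : cover R (A \ {x}) (B \ {y}) ≤ cover R (A \ {x}) (B \ {z | R x z}) :=
    cover_anti _ fun w hw => ⟨hw.1, fun h => hw.2 (by rw [Set.mem_singleton_iff.1 h]; exact hxy)⟩
  rw [← incl_incl (link_le_del_of_eq (link_pendant ho' B) (del_pendant (R := R) ho' B)) h₁,
    incl_link_eq_zero (link_pendant ho' B) (del_pendant ho' B) hp hm hM, LinearMap.zero_apply,
    map_zero, LinearMap.zero_apply]

/-- Decomposition at `y`, where additivity is certified by erasing a neighbour `x` of `y`. -/
lemma hasPoly_cover_split_right (ho : o ∉ A) (hx : x ∈ A) (hy : y ∈ B) (hxy : R x y)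
    {S : Finset V} (hS : ∀ z, z ∈ S ↔ z ∈ A ∧ R z y) {n : ℕ} (hn : S.card = n + 1)
    (hp : HasPoly (cover R A (B \ {y})) p)
    (hq : HasPoly (cover R (A \ {z | R z y}) (B \ {y})) q)
    (hm : HasPoly (cover R (A \ {x}) (B \ {y})) m)
    (ht : HasPoly (cover R (A \ {x}) ((B \ {y}) \ {z | R x z})) (m + p)) :
    HasPoly (cover R A B) (X ^ n * q + p) := by
  have hM := hasPoly_pendant ho hy hS hq
  rw [hn, pow_succ', mul_assoc] at hM
  refine HasPoly.link_of_incl_eq_zero (link_pendant ho B) (del_pendant ho B) hp hM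
    (incl_eq_zero_of_connecting _ (hasPoly_del_pendant ho hx hxy) hM ?_)
  exact connecting_eq_zero (link_cover hx _) (del_cover hx _) hm hp ht

end Cover

/-! ### The grid with three rows: the vertex in column `c` and row `r` is the number `3 * c + r` -/

/-- Closed adjacency in the grid with three rows. -/
def gridRel (x y : ℕ) : Prop :=
  x = y ∨ x + 3 = y ∨ y + 3 = x ∨ (x / 3 = y / 3 ∧ (x + 1 = y ∨ y + 1 = x))

lemma gridRel_comm {x y : ℕ} : gridRel x y ↔ gridRel y x := by
  unfold gridRel
  omega

/-- All vertices in columns `1, …, p - 1`, together with the vertices `3 * p + i` for which the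
`i`-th bit of `w` is set. -/
def strip (p w : ℕ) : Set ℕ :=
  {v | (3 ≤ v ∧ v < 3 * p) ∨ (3 * p ≤ v ∧ w.testBit (v - 3 * p) = true)}

lemma mem_strip {p w v : ℕ} : v ∈ strip p w ↔
    (3 ≤ v ∧ v < 3 * p) ∨ (3 * p ≤ v ∧ w.testBit (v - 3 * p) = true) := Iff.rfl

lemma add_mem_strip {p w i : ℕ} : 3 * p + i ∈ strip p w ↔ w.testBit i = true := by
  simp [mem_strip]

/-- The closed neighbourhood of `i`, as a bit mask. -/
def nbMask (i : ℕ) : ℕ := (if i % 3 = 0 then 89 else if i % 3 = 1 then 93 else 77) <<< (i - 3)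

/-- Clear the bits of `m` in `w`. -/
def clear (w m : ℕ) : ℕ := w ^^^ (w &&& m)

lemma testBit_clear (w m i : ℕ) : (clear w m).testBit i = (w.testBit i && !m.testBit i) := by
  rw [clear, Nat.testBit_xor, Nat.testBit_and]
  cases w.testBit i <;> cases m.testBit i <;> rfl

lemma testBit_nbMask {i : ℕ} (hi : 3 ≤ i) (j : ℕ) : (nbMask i).testBit j = true ↔ gridRel i j := by
  obtain ⟨i, rfl⟩ := Nat.exists_eq_add_of_le' hi
  rw [nbMask, Nat.testBit_shiftLeft, Nat.add_sub_cancel, gridRel]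
  by_cases hj : j < i
  · simp only [ge_iff_le, hj.not_ge, decide_false, Bool.false_and, Bool.false_eq_true, false_iff]
    omega
  obtain ⟨k, rfl⟩ := Nat.exists_eq_add_of_le (not_lt.1 hj)
  simp only [ge_iff_le, Nat.le_add_right, decide_true, Bool.true_and, Nat.add_sub_cancel_left]
  by_cases hk : k < 7
  · rw [Nat.add_mod_right]
    obtain h | h | h : i % 3 = 0 ∨ i % 3 = 1 ∨ i % 3 = 2 := by omega
    all_goals rw [h]; interval_cases k <;> norm_num [Nat.testBit] <;> omega
  · rw [Nat.testBit_lt_two_pow]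
    · simp only [Bool.false_eq_true, false_iff]
      omega
    · calc _ < 2 ^ 7 := by split_ifs <;> norm_num
        _ ≤ 2 ^ k := Nat.pow_le_pow_right (by norm_num) (not_lt.1 hk)

lemma strip_clear_bit (p w i : ℕ) : strip p (clear w (1 <<< i)) = strip p w \ {3 * p + i} := by
  ext v
  simp only [mem_strip, testBit_clear, Set.mem_sdiff, Set.mem_singleton_iff, Nat.one_shiftLeft,
    Nat.testBit_two_pow, Bool.and_eq_true, Bool.not_eq_true', decide_eq_false_iff_not]
  constructor
  · rintro (h | ⟨h, h₁, h₂⟩)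
    · exact ⟨Or.inl h, by omega⟩
    · exact ⟨Or.inr ⟨h, h₁⟩, by omega⟩
  · rintro ⟨h | ⟨h, h₁⟩, h₂⟩
    · exact Or.inl h
    · exact Or.inr ⟨h, h₁, by omega⟩

lemma gridRel_add_left {p i v : ℕ} (h : 3 * p ≤ v) :
    gridRel (3 * p + i) v ↔ gridRel i (v - 3 * p) := by
  unfold gridRel
  omega

lemma strip_clear_nbMask (p w : ℕ) {i : ℕ} (hi : 3 ≤ i) :
    strip p (clear w (nbMask i)) = strip p w \ {v | gridRel (3 * p + i) v} := by
  ext v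
  simp only [mem_strip, testBit_clear, Set.mem_sdiff, Set.mem_ofPred_eq, Bool.and_eq_true,
    Bool.not_eq_true']
  rcases lt_or_ge v (3 * p) with h | h
  · have : ¬ gridRel (3 * p + i) v := by unfold gridRel; omega
    simp [h, h.not_ge, this]
  · rw [gridRel_add_left h, ← testBit_nbMask hi]
    simp [h, h.not_gt]

lemma strip_clear_nbMask' (p w : ℕ) {i : ℕ} (hi : 3 ≤ i) :
    strip p (clear w (nbMask i)) = strip p w \ {v | gridRel v (3 * p + i)} := by
  simp_rw [strip_clear_nbMask p w hi, gridRel_comm]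

lemma exists_notMem_strip (p w : ℕ) : 3 * p + w ∉ strip p w := by
  rw [add_mem_strip, Nat.testBit_lt_two_pow Nat.lt_two_pow_self]
  exact Bool.false_ne_true

/-- The bits of `w` in the closed neighbourhood of `i`. -/
def nbBits (w i : ℕ) : Finset ℕ :=
  (Finset.range (i + 4)).filter fun j => (w &&& nbMask i).testBit j = true

lemma mem_map_nbBits (p w : ℕ) {i : ℕ} (hi : 3 ≤ i) (v : ℕ) :
    v ∈ (nbBits w i).map (addLeftEmbedding (3 * p)) ↔
      v ∈ strip p w ∧ gridRel v (3 * p + i) := by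
  simp only [Finset.mem_map, nbBits, Finset.mem_filter, Finset.mem_range, Nat.testBit_and,
    Bool.and_eq_true, testBit_nbMask hi, addLeftEmbedding_apply]
  constructor
  · rintro ⟨j, ⟨_, h₂, h₃⟩, rfl⟩
    exact ⟨add_mem_strip.2 h₂, by rw [gridRel_comm, gridRel_add_left (by omega)]; simpa using h₃⟩
  · rintro ⟨h₁, h₂⟩
    have h : 3 * p ≤ v := by unfold gridRel at h₂; omega
    obtain ⟨j, rfl⟩ := Nat.exists_eq_add_of_le h
    rw [gridRel_comm, gridRel_add_left h, Nat.add_sub_cancel_left] at h₂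
    refine ⟨j, ⟨?_, add_mem_strip.1 h₁, h₂⟩, rfl⟩
    unfold gridRel at h₂
    omega

/-- The covering complex of the grid with `A = strip p a` and `B = strip p b`. -/
def gridCover (p a b : ℕ) : LowerSet (Set ℕ) := cover gridRel (strip p a) (strip p b)

/-- The polynomial with a given list of coefficients. -/
noncomputable def ofList : List ℕ → ℕ[X]
  | [] => 0
  | c :: l => C c + X * ofList l

/-- Coefficient list of the product by `X`. -/
def mulX : List ℕ → List ℕ
  | [] => []
  | c :: l => 0 :: c :: l

lemma ofList_mulX : ∀ l, ofList (mulX l) = X * ofList l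
  | [] => by simp [mulX, ofList]
  | c :: l => by simp [mulX, ofList]

lemma ofList_mulX_iterate (n : ℕ) (l : List ℕ) : ofList (mulX^[n] l) = X ^ n * ofList l := by
  induction n with
  | zero => simp
  | succ n ih => rw [Function.iterate_succ_apply', ofList_mulX, ih, pow_succ', mul_assoc]

/-- Coefficient list of the sum. -/
def addList : List ℕ → List ℕ → List ℕ
  | [], l => l
  | l, [] => l
  | c :: l, d :: m => (c + d) :: addList l m

lemma ofList_addList : ∀ l m, ofList (addList l m) = ofList l + ofList m
  | [], l => by simp [addList, ofList]
  | c :: l, [] => by simp [addList, ofList]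
  | c :: l, d :: m => by
    simp only [addList, ofList, ofList_addList l m, C_add]
    ring

/-- No coefficient is nonzero in both lists. -/
def disjList : List ℕ → List ℕ → Bool
  | c :: l, d :: m => (c == 0 || d == 0) && disjList l m
  | _, _ => true

lemma coeff_ofList_cons_succ (c : ℕ) (l : List ℕ) (k : ℕ) :
    (ofList (c :: l)).coeff (k + 1) = (ofList l).coeff k := by
  simp [ofList]

lemma coeff_of_disjList : ∀ (l m : List ℕ), disjList l m = true →
    ∀ k, (ofList l).coeff k = 0 ∨ (ofList m).coeff k = 0
  | [], _, _, _ => Or.inl rfl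
  | _ :: _, [], _, _ => Or.inr rfl
  | c :: l, d :: m, h, k => by
    simp only [disjList, Bool.and_eq_true, Bool.or_eq_true, beq_iff_eq] at h
    cases k with
    | zero => simpa [ofList] using h.1
    | succ k => simpa only [coeff_ofList_cons_succ] using coeff_of_disjList l m h.2 k

/-- A reduction of a covering complex by decompositions at vertices. -/
inductive Reduction
  | finish
  | void (i : ℕ)
  | cone (i : ℕ)
  | left (i : ℕ) (c d : Reduction)
  | right (i : ℕ) (c d : Reduction)

/-- Evaluation of a reduction: if `reduce t c a b = some r` then the Poincaré polynomial of
`gridCover p a b` is `r` times that of the complex `t` where the reduction stops. If `t = none`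
then the reduction stops at the empty complex, and decompositions into pieces with homology
in disjoint degrees are allowed. -/
def reduce (t : Option (ℕ × ℕ)) : Reduction → ℕ → ℕ → Option (List ℕ)
  | .finish, a, b => if t.getD (0, 0) = (a, b) then some [1] else none
  | .void i, a, b => if 3 ≤ i ∧ b.testBit i = true ∧ clear a (nbMask i) = a then some [] else none
  | .cone i, a, b => if 3 ≤ i ∧ a.testBit i = true ∧ clear b (nbMask i) = b then some [] else none
  | .left i c d, a, b =>
    if 3 ≤ i ∧ a.testBit i = true then
      match reduce t c (clear a (1 <<< i)) b,
          reduce t d (clear a (1 <<< i)) (clear b (nbMask i)) with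
      | some l, some m =>
        if l = [] ∨ m = [] ∨ (t = none ∧ disjList l m = true) then some (addList m (mulX l))
        else none
      | _, _ => none
    else none
  | .right i c d, a, b =>
    if 3 ≤ i ∧ b.testBit i = true then
      match reduce t c a (clear b (1 <<< i)),
          reduce t d (clear a (nbMask i)) (clear b (1 <<< i)) with
      | some l, some m =>
        if m = [] then some l
        else if l = [] ∧ nbBits a i ≠ ∅ then some (mulX^[(nbBits a i).card - 1] m)
        else none
      | _, _ => none
    else none

theorem hasPoly_of_reduce {t : Option (ℕ × ℕ)} {p : ℕ} {q : ℕ[X]}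
    (ht : HasPoly (gridCover p (t.getD (0, 0)).1 (t.getD (0, 0)).2) q)
    (hq : t = none → q = 1) (c : Reduction) {a b : ℕ} {r : List ℕ}
    (h : reduce t c a b = some r) : HasPoly (gridCover p a b) (ofList r * q) := by
  induction c generalizing a b r with
  | finish =>
    simp only [reduce, Option.ite_none_right_eq_some, Option.some.injEq] at h
    obtain ⟨h, rfl⟩ := h
    rw [h] at ht
    simpa [ofList] using ht
  | void i =>
    simp only [reduce, Option.ite_none_right_eq_some, Option.some.injEq] at h
    obtain ⟨⟨h₁, h₂, h₃⟩, rfl⟩ := h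
    rw [ofList, zero_mul]
    refine hasPoly_cover_of_isolated_right (add_mem_strip.2 h₂) fun x hx hxi => ?_
    rw [← h₃, strip_clear_nbMask' p a h₁] at hx
    exact hx.2 hxi
  | cone i =>
    simp only [reduce, Option.ite_none_right_eq_some, Option.some.injEq] at h
    obtain ⟨⟨h₁, h₂, h₃⟩, rfl⟩ := h
    rw [ofList, zero_mul]
    refine hasPoly_cover_of_isolated_left (add_mem_strip.2 h₂) fun x hx hxi => ?_
    rw [← h₃, strip_clear_nbMask p b h₁] at hx
    exact hx.2 hxi
  | left i c d ihc ihd =>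
    simp only [reduce, Option.ite_none_right_eq_some] at h
    obtain ⟨⟨h₁, h₂⟩, h⟩ := h
    split at h
    · rename_i l m hl hm
      simp only [Option.ite_none_right_eq_some, Option.some.injEq] at h
      obtain ⟨h, rfl⟩ := h
      have hL := ihc hl
      have hD := ihd hm
      rw [gridCover, strip_clear_bit] at hL hD
      rw [strip_clear_nbMask p b h₁] at hD
      have hx := add_mem_strip (p := p).2 h₂
      rw [ofList_addList, ofList_mulX, add_mul, mul_assoc]
      refine hasPoly_cover_of_disjoint hx hL hD fun k => ?_
      rcases h with rfl | rfl | ⟨h₃, h₄⟩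
      · left; simp [ofList]
      · right; simp [ofList]
      · rw [hq h₃, mul_one, mul_one]
        exact coeff_of_disjList _ _ h₄ k
    · simp at h
  | right i c d ihc ihd =>
    simp only [reduce, Option.ite_none_right_eq_some] at h
    obtain ⟨⟨h₁, h₂⟩, h⟩ := h
    split at h
    · rename_i l m hl hm
      have hP := ihc hl
      have hQ := ihd hm
      rw [gridCover, strip_clear_bit] at hP hQ
      rw [strip_clear_nbMask' p a h₁] at hQ
      have hy := add_mem_strip (p := p).2 h₂
      split_ifs at h with h₃ h₄
      · simp only [Option.some.injEq] at h
        subst h h₃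
        rw [ofList, zero_mul] at hQ
        exact hasPoly_cover_erase (exists_notMem_strip p a) hy (mem_map_nbBits p a h₁) hQ hP
      · simp only [Option.some.injEq] at h
        obtain ⟨rfl, h₅⟩ := h₄
        rw [ofList, zero_mul] at hP
        rw [← h, ofList_mulX_iterate, mul_assoc]
        refine hasPoly_cover_of_erase_acyclic (exists_notMem_strip p a) hy
          (mem_map_nbBits p a h₁) ?_ hQ hP
        rw [Finset.card_map,
          Nat.sub_add_cancel (Finset.card_pos.2 (Finset.nonempty_iff_ne_empty.2 h₅))]
    · simp at h

namespace Reduction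

/-- Remove `i` from the left part if the acyclicity of its deletion is witnessed by `c`. -/
def leftOf (i : ℕ) (c d : Reduction) : Reduction := left i d c

/-- Remove `i` from the right part if the acyclicity of the other piece is witnessed by `c`. -/
def rightOf (i : ℕ) (c d : Reduction) : Reduction := right i d c

/-- Remove `i` from the right part, as the neighbourhood of `i` contains that of `j`. -/
def dropRight (i j : ℕ) (c : Reduction) : Reduction := right i c (void j)

/-- Remove `i` from the left part, as the neighbourhood of `i` contains that of `j`. -/
def dropLeft (i j : ℕ) (c : Reduction) : Reduction := left i c (cone j)

/-- Remove `i` and its neighbours, as `i` is the only neighbour of `j`. -/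
def dropPair (i j : ℕ) (c : Reduction) : Reduction := left i (void j) c

end Reduction

/-- Prepend `j` full columns to a bit pattern. -/
def padBits : ℕ → ℕ → ℕ
  | 0, w => w
  | j + 1, w => padBits j (8 * w + 7)

lemma testBit_eight_mul_add (w : ℕ) {r i : ℕ} (hr : r < 8) (hi : 3 ≤ i) :
    (8 * w + r).testBit i = w.testBit (i - 3) := by
  obtain ⟨i, rfl⟩ := Nat.exists_eq_add_of_le' hi
  rw [Nat.add_sub_cancel, Nat.testBit_add, show (2 : ℕ) ^ 3 = 8 from rfl,
    Nat.mul_add_div (by norm_num), Nat.div_eq_of_lt hr, add_zero]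

lemma strip_add_two (p w : ℕ) : strip (p + 2) w = strip (p + 1) (8 * w + 7) := by
  ext v
  rw [mem_strip, mem_strip]
  rcases lt_or_ge v (3 * (p + 1)) with h | h
  · simp [h, h.not_ge, show v < 3 * (p + 2) by omega, show ¬ 3 * (p + 2) ≤ v by omega]
  obtain ⟨i, rfl⟩ := Nat.exists_eq_add_of_le h
  rw [Nat.add_sub_cancel_left]
  rcases lt_or_ge i 3 with hi | hi
  · have h₁ : (8 * w + 7).testBit i = true := by
      rw [show 8 * w + 7 = 2 ^ 3 * w + 7 by norm_num, Nat.testBit_two_pow_mul_add _ (by norm_num)]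
      interval_cases i <;> rfl
    simp only [h₁, and_true]
    omega
  · rw [testBit_eight_mul_add w (by norm_num) hi,
      show 3 * (p + 1) + i - 3 * (p + 2) = i - 3 by omega]
    grind

lemma strip_one (w : ℕ) : strip 1 w = strip 0 (8 * w) := by
  ext v
  rw [mem_strip, mem_strip]
  rcases lt_or_ge v 3 with h | h
  · have h₁ : (8 * w).testBit v = false := by
      rw [show 8 * w = 2 ^ 3 * w + 0 by norm_num, Nat.testBit_two_pow_mul_add _ (by norm_num)]
      simp [h]
    simp [h, h.not_ge, h₁]
  · have := testBit_eight_mul_add w (r := 0) (by norm_num) h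
    rw [add_zero] at this
    simp [h, h.not_gt, this]

lemma gridCover_pad (p j a b : ℕ) :
    gridCover (p + j + 1) a b = gridCover (p + 1) (padBits j a) (padBits j b) := by
  induction j generalizing a b with
  | zero => rfl
  | succ j ih =>
    rw [padBits, padBits, ← ih, gridCover, gridCover, ← add_assoc, strip_add_two, strip_add_two]

/-- Two columns of bits for the left parts and the right parts of the complexes `endCover`. -/
def pattern : ℕ → ℕ × ℕ
  | 0 => (63, 63)
  | 1 => (58, 47)
  | 2 => (47, 58)
  | 3 => (23, 61)
  | 4 => (45, 23)
  | 5 => (61, 23)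
  | 6 => (23, 45)
  | 7 => (58, 45)
  | _ => (45, 58)

/-- The covering complex on `m + 2` columns, where all vertices in the first `m` columns are
present on both sides, and the vertices in the last two columns are given by `pattern i`. -/
def endCover (i m : ℕ) : LowerSet (Set ℕ) := gridCover (m + 1) (pattern i).1 (pattern i).2

lemma endCover_add (i m j : ℕ) : endCover i (m + j) =
    gridCover (m + 1) (padBits j (pattern i).1) (padBits j (pattern i).2) :=
  gridCover_pad m j _ _

lemma hasPoly_gridCover_zero (c : Reduction) {a b : ℕ} {r : List ℕ}
    (h : reduce none c a b = some r) : HasPoly (gridCover 0 a b) (ofList r) := by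
  have he : strip 0 0 = ∅ := by
    ext v
    simp [mem_strip]
  have h₀ : HasPoly (gridCover 0 0 0) 1 := by
    rw [gridCover, he]
    exact hasPoly_cover_empty
  simpa using hasPoly_of_reduce (t := none) h₀ (fun _ => rfl) c h

lemma hasPoly_endCover (i m : ℕ) (r : List ℕ) (c : Reduction)
    (h : reduce none c (8 * padBits m (pattern i).1) (8 * padBits m (pattern i).2) = some r) :
    HasPoly (endCover i m) (ofList r) := by
  have e := endCover_add i 0 m
  rw [zero_add] at e
  rw [e, gridCover, strip_one, strip_one]
  exact hasPoly_gridCover_zero c h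

lemma hasPoly_of_fold (s : ℕ) (c : Reduction) {i m j a b : ℕ} {q : ℕ[X]}
    (h : HasPoly (endCover i (m + j)) q)
    (hc : reduce (some (padBits j (pattern i).1, padBits j (pattern i).2)) c a b =
      some (mulX^[s] [1])) : HasPoly (gridCover (m + 1) a b) (X ^ s * q) := by
  rw [endCover_add] at h
  have h₁ := hasPoly_of_reduce (t := some (_, _)) h (fun h => nomatch h) c hc
  have h₂ : ofList [1] = 1 := by simp [ofList]
  rwa [ofList_mulX_iterate, h₂, mul_one] at h₁

lemma hasPoly_gridCover_split_left (i j : ℕ) {n a b : ℕ} {k : ℕ} {p q m t : ℕ[X]}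
    (h : (3 ≤ i ∧ a.testBit i = true) ∧ (3 ≤ j ∧ b.testBit j = true) ∧
      (nbMask i).testBit j = true ∧ (nbBits (clear a (1 <<< i)) j).card = k)
    (hp : HasPoly (gridCover n (clear a (1 <<< i)) b) p)
    (hq : HasPoly (gridCover n (clear a (1 <<< i)) (clear b (nbMask i))) q)
    (hm : HasPoly (gridCover n (clear a (1 <<< i)) (clear b (1 <<< j))) m)
    (ht : HasPoly (gridCover n (clear (clear a (1 <<< i)) (nbMask j)) (clear b (1 <<< j))) t)
    (e : X ^ k * t = m + X * p) : HasPoly (gridCover n a b) (q + X * p) := by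
  obtain ⟨⟨hi, ha⟩, ⟨hj, hb⟩, hij, rfl⟩ := h
  have hS := mem_map_nbBits n (clear a (1 <<< i)) hj
  simp only [gridCover, strip_clear_bit, strip_clear_nbMask' _ _ hj, strip_clear_nbMask _ _ hi]
    at hp hq hm ht hS
  refine hasPoly_cover_split_left (exists_notMem_strip n a) (add_mem_strip.2 ha)
    (add_mem_strip.2 hb) ?_ hS hp hq hm ht (by rwa [Finset.card_map])
  rw [gridRel_add_left (by omega), Nat.add_sub_cancel_left]
  exact (testBit_nbMask hi j).1 hij

lemma hasPoly_gridCover_split_right (i j : ℕ) {n a b : ℕ} {k : ℕ} {p q m t : ℕ[X]}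
    (h : (3 ≤ i ∧ a.testBit i = true) ∧ (3 ≤ j ∧ b.testBit j = true) ∧
      (nbMask i).testBit j = true ∧ (nbBits a j).card = k + 1)
    (hp : HasPoly (gridCover n a (clear b (1 <<< j))) p)
    (hq : HasPoly (gridCover n (clear a (nbMask j)) (clear b (1 <<< j))) q)
    (hm : HasPoly (gridCover n (clear a (1 <<< i)) (clear b (1 <<< j))) m)
    (ht : HasPoly (gridCover n (clear a (1 <<< i)) (clear (clear b (1 <<< j)) (nbMask i))) t)
    (e : t = m + p) : HasPoly (gridCover n a b) (X ^ k * q + p) := by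
  obtain ⟨⟨hi, ha⟩, ⟨hj, hb⟩, hij, hk⟩ := h
  subst e
  simp only [gridCover, strip_clear_bit, strip_clear_nbMask' _ _ hj, strip_clear_nbMask _ _ hi]
    at hp hq hm ht
  refine hasPoly_cover_split_right (exists_notMem_strip n a) (add_mem_strip.2 ha)
    (add_mem_strip.2 hb) ?_ (mem_map_nbBits n a hj) (by rwa [Finset.card_map]) hp hq hm ht
  rw [gridRel_add_left (by omega), Nat.add_sub_cancel_left]
  exact (testBit_nbMask hi j).1 hij

lemma hasPoly_endCover_4 {m : ℕ} {q : ℕ[X]} (h : HasPoly (endCover 8 (m + 1)) q) :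
    HasPoly (endCover 4 (m + 2)) (X ^ 2 * q) := by
  rw [endCover_add]
  exact hasPoly_of_fold 2 (.leftOf 4 (.dropLeft 9 6 <| .dropRight 8 10 <| .cone 8) <| .right 10
    (.dropLeft 6 9 <| .dropRight 8 7 <| .cone 11) <| .dropRight 3 6 <| .dropRight 5 8 <| .finish)
    h (by decide +kernel)

lemma hasPoly_endCover_8 {m : ℕ} {q : ℕ[X]} (h : HasPoly (endCover 4 (m + 1)) q) :
    HasPoly (endCover 8 (m + 3)) (X ^ 3 * q) := by
  rw [endCover_add]
  exact hasPoly_of_fold 3 (.rightOf 6 (.dropRight 13 12 <| .dropRight 14 10 <| .cone 14) <| .left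
    14 (.dropRight 12 13 <| .dropRight 10 14 <| .cone 9) <| .dropLeft 9 12 <| .dropRight 8 10 <|
    .dropLeft 7 11 <| .dropLeft 4 6 <| .dropPair 12 12 <| .dropPair 11 10 <| .finish)
    h (by decide +kernel)

lemma hasPoly_endCover_6 {m : ℕ} {q : ℕ[X]} (h : HasPoly (endCover 7 (m + 1)) q) :
    HasPoly (endCover 6 (m + 2)) (X ^ 2 * q) := by
  rw [endCover_add]
  exact hasPoly_of_fold 2 (.rightOf 4 (.dropRight 9 6 <| .dropRight 11 8 <| .cone 10) <| .left 10
    (.dropRight 6 9 <| .dropRight 8 11 <| .cone 7) <| .dropLeft 3 6 <| .dropLeft 5 8 <| .finish)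
    h (by decide +kernel)

lemma hasPoly_endCover_7 {m : ℕ} {q : ℕ[X]} (h : HasPoly (endCover 6 (m + 1)) q) :
    HasPoly (endCover 7 (m + 3)) (X ^ 3 * q) := by
  rw [endCover_add]
  exact hasPoly_of_fold 3 (.leftOf 6 (.dropLeft 13 12 <| .dropRight 11 14 <| .cone 10) <| .right
    14 (.dropLeft 12 13 <| .dropRight 11 9 <| .cone 14) <| .dropRight 9 12 <| .dropRight 7 11 <|
    .dropRight 4 6 <| .dropLeft 8 10 <| .dropPair 12 12 <| .dropPair 10 11 <| .finish)
    h (by decide +kernel)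

lemma hasPoly_endCover_5 {m : ℕ} {p q r t : ℕ[X]}
    (hp : HasPoly (endCover 4 (m + 4)) p)
    (hq : HasPoly (endCover 3 (m + 2)) q)
    (hr : HasPoly (endCover 1 (m + 1)) r)
    (ht : HasPoly (endCover 2 (m + 3)) t)
    (e : X ^ 2 * (X ^ 0 * t) = X ^ 6 * r + X * (X ^ 0 * p)) :
    HasPoly (endCover 5 (m + 4)) (X ^ 4 * q + X * (X ^ 0 * p)) := by
  rw [endCover_add]
  exact hasPoly_gridCover_split_left 16 16 (by decide +kernel)
    (hasPoly_of_fold 0 (.finish) hp (by decide +kernel))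
    (hasPoly_of_fold 4 (.dropLeft 12 15 <| .dropLeft 9 15 <| .dropRight 7 9 <| .dropLeft 14 17 <|
      .dropLeft 11 17 <| .dropPair 15 12 <| .dropPair 17 14 <| .finish) hq (by decide +kernel))
    (hasPoly_of_fold 6 (.dropLeft 12 15 <| .dropLeft 9 15 <| .dropRight 11 13 <| .dropRight 7 9 <|
      .dropLeft 14 17 <| .dropLeft 11 17 <| .dropRight 9 13 <| .dropRight 10 13 <| .dropLeft 3 6 <|
      .dropLeft 5 8 <| .dropPair 15 12 <| .dropPair 10 13 <| .dropPair 17 14 <| .finish) hr (by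
      decide +kernel))
    (hasPoly_of_fold 0 (.dropRight 9 12 <| .dropRight 11 14 <| .finish) ht (by decide +kernel))
    e

lemma hasPoly_endCover_2 {m : ℕ} {p q r t : ℕ[X]}
    (hp : HasPoly (endCover 8 (m + 5)) p)
    (hq : HasPoly (endCover 1 (m + 3)) q)
    (hr : HasPoly (endCover 3 (m + 1)) r)
    (ht : HasPoly (endCover 5 (m + 3)) t)
    (e : X ^ 2 * (X ^ 1 * t) = X ^ 7 * r + X * (X ^ 0 * p)) :
    HasPoly (endCover 2 (m + 5)) (X ^ 4 * q + X * (X ^ 0 * p)) := by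
  rw [endCover_add]
  exact hasPoly_gridCover_split_left 16 19 (by decide +kernel)
    (hasPoly_of_fold 0 (.finish) hp (by decide +kernel))
    (hasPoly_of_fold 4 (.dropLeft 15 18 <| .dropLeft 17 20 <| .dropLeft 9 12 <| .dropLeft 11 14 <|
      .dropPair 18 18 <| .dropPair 20 20 <| .finish) hq (by decide +kernel))
    (hasPoly_of_fold 7 (.dropLeft 15 18 <| .dropRight 14 16 <| .dropLeft 17 20 <| .dropRight 12 16
      <| .dropRight 13 16 <| .dropRight 10 16 <| .dropLeft 9 12 <| .dropLeft 10 12 <| .dropLeft 6 12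
      <| .dropRight 4 6 <| .dropLeft 11 14 <| .dropLeft 8 14 <| .dropPair 18 18 <| .dropPair 20 20
      <| .dropPair 13 16 <| .dropPair 12 9 <| .dropPair 14 11 <| .finish) hr (by decide +kernel))
    (hasPoly_of_fold 1 (.dropRight 16 18 <| .dropRight 12 18 <| .dropRight 14 20 <| .dropLeft 10
      12 <| .dropPair 15 18 <| .dropPair 17 20 <| .finish) ht (by decide +kernel))
    e

lemma hasPoly_endCover_3 {m : ℕ} {p q r t : ℕ[X]}
    (hp : HasPoly (endCover 6 (m + 4)) p)
    (hq : HasPoly (endCover 5 (m + 2)) q)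
    (hr : HasPoly (endCover 2 (m + 1)) r)
    (ht : HasPoly (endCover 1 (m + 3)) t)
    (e : X ^ 2 * t = X ^ 4 * r + X ^ 0 * p) :
    HasPoly (endCover 3 (m + 4)) (X ^ 1 * (X ^ 1 * q) + X ^ 0 * p) := by
  rw [endCover_add]
  exact hasPoly_gridCover_split_right 16 16 (by decide +kernel)
    (hasPoly_of_fold 0 (.finish) hp (by decide +kernel))
    (hasPoly_of_fold 1 (.dropRight 12 15 <| .dropRight 9 15 <| .dropRight 14 17 <| .dropRight 11
      17 <| .dropLeft 7 9 <| .dropPair 12 15 <| .dropPair 14 17 <| .finish) hq (by decide +kernel))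
    (hasPoly_of_fold 4 (.dropRight 12 15 <| .dropRight 9 15 <| .dropRight 14 17 <| .dropRight 11
      17 <| .dropLeft 9 13 <| .dropLeft 10 13 <| .dropLeft 11 13 <| .dropLeft 7 13 <| .dropRight 3 6
      <| .dropRight 5 8 <| .dropPair 12 15 <| .dropPair 14 17 <| .dropPair 13 10 <| .finish) hr (by
      decide +kernel))
    (hasPoly_of_fold 2 (.dropLeft 9 12 <| .dropLeft 11 14 <| .finish) ht (by decide +kernel))
    e

lemma hasPoly_endCover_1 {m : ℕ} {p q r t : ℕ[X]}
    (hp : HasPoly (endCover 7 (m + 5)) p)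
    (hq : HasPoly (endCover 2 (m + 3)) q)
    (hr : HasPoly (endCover 5 (m + 1)) r)
    (ht : HasPoly (endCover 3 (m + 3)) t)
    (e : X ^ 3 * t = X ^ 5 * r + X ^ 0 * p) :
    HasPoly (endCover 1 (m + 5)) (X ^ 2 * (X ^ 0 * q) + X ^ 0 * p) := by
  rw [endCover_add]
  exact hasPoly_gridCover_split_right 19 16 (by decide +kernel)
    (hasPoly_of_fold 0 (.finish) hp (by decide +kernel))
    (hasPoly_of_fold 0 (.dropRight 15 18 <| .dropRight 17 20 <| .dropRight 9 12 <| .dropRight 11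
      14 <| .dropPair 18 18 <| .dropPair 20 20 <| .finish) hq (by decide +kernel))
    (hasPoly_of_fold 5 (.dropRight 15 18 <| .dropRight 17 20 <| .dropLeft 12 16 <| .dropLeft 13 16
      <| .dropLeft 14 16 <| .dropLeft 10 16 <| .dropRight 9 12 <| .dropRight 10 12 <| .dropRight 6
      12 <| .dropRight 11 14 <| .dropRight 8 14 <| .dropLeft 4 6 <| .dropPair 18 18 <| .dropPair 20
      20 <| .dropPair 9 12 <| .dropPair 16 13 <| .dropPair 11 14 <| .finish) hr (by decide +kernel))
    (hasPoly_of_fold 3 (.dropLeft 16 18 <| .dropLeft 12 18 <| .dropRight 10 12 <| .dropLeft 14 20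
      <| .dropPair 18 15 <| .dropPair 20 17 <| .finish) ht (by decide +kernel))
    e

lemma strip_clear_two_bits (p w i j : ℕ) :
    strip p (clear w (1 <<< i ||| 1 <<< j)) = strip p w \ {3 * p + i, 3 * p + j} := by
  have e : clear w (1 <<< i ||| 1 <<< j) = clear (clear w (1 <<< i)) (1 <<< j) := by
    refine Nat.eq_of_testBit_eq fun k => ?_
    simp only [testBit_clear, Nat.testBit_or]
    cases w.testBit k <;> simp
  rw [e, strip_clear_bit, strip_clear_bit, Set.sdiff_sdiff]
  rfl

lemma hasPoly_gridCover_of_shrink (i j l : ℕ) {n a b : ℕ} {p q m t : ℕ[X]}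
    (h : (3 ≤ i ∧ a.testBit i = true) ∧ (nbMask i).testBit j = true ∧ (nbMask i).testBit l = true)
    (hp : HasPoly (gridCover n (clear a (1 <<< i)) b) p)
    (hq : HasPoly (gridCover n (clear a (1 <<< i)) (clear b (nbMask i))) q)
    (hm : HasPoly (gridCover n (clear a (1 <<< i)) (clear b (1 <<< j ||| 1 <<< l))) m)
    (ht : HasPoly (gridCover n a (clear b (1 <<< j ||| 1 <<< l))) t)
    (e : t = q + X * m) : HasPoly (gridCover n a b) (q + X * p) := by
  obtain ⟨⟨hi, ha⟩, hj, hl⟩ := h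
  subst e
  simp only [gridCover, strip_clear_bit, strip_clear_two_bits, strip_clear_nbMask _ _ hi]
    at hp hq hm ht
  refine hasPoly_cover_of_shrink (add_mem_strip.2 ha) Set.sdiff_subset (fun v hv => ⟨hv.1, ?_⟩)
    hp hq hm ht
  rintro (rfl | rfl) <;> refine hv.2 ?_ <;>
    rw [Set.mem_ofPred_eq, gridRel_add_left (by omega), Nat.add_sub_cancel_left,
      ← testBit_nbMask hi] <;> assumption

lemma hasPoly_endCover_0 {m : ℕ} {p q r t : ℕ[X]}
    (hp : HasPoly (endCover 2 (m + 3)) p)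
    (hq : HasPoly (endCover 3 (m + 1)) q)
    (hr : HasPoly (endCover 4 (m + 3)) r)
    (ht : HasPoly (endCover 5 (m + 3)) t)
    (e : X ^ 1 * t = X ^ 5 * q + X * (X ^ 1 * r)) :
    HasPoly (endCover 0 (m + 3)) (X ^ 5 * q + X * (X ^ 0 * p)) := by
  rw [endCover_add]
  exact hasPoly_gridCover_of_shrink 13 12 14 (by decide +kernel)
    (hasPoly_of_fold 0 (.dropRight 9 12 <| .dropRight 11 14 <| .finish) hp (by decide +kernel))
    (hasPoly_of_fold 5 (.dropLeft 9 12 <| .dropLeft 10 12 <| .dropLeft 6 12 <| .dropRight 4 6 <|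
      .dropLeft 11 14 <| .dropLeft 8 14 <| .dropPair 12 9 <| .dropPair 14 11 <| .finish) hq (by
      decide +kernel))
    (hasPoly_of_fold 1 (.dropLeft 10 12 <| .finish) hr (by decide +kernel))
    (hasPoly_of_fold 1 (.dropLeft 10 12 <| .finish) ht (by decide +kernel))
    e

/-- The Poincaré polynomials of `endCover 1`. -/
noncomputable def polyU : ℕ → ℕ[X]
  | 0 => 2 * X
  | 1 => X ^ 2 + X ^ 3
  | m + 2 => X ^ ((5 * (m + 2) + 4) / 3) + X ^ 3 * polyU m

/-- The Poincaré polynomials of `endCover 3`. -/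
noncomputable def polyW : ℕ → ℕ[X]
  | 0 => 2 * X
  | 1 => 2 * X ^ 3
  | m + 2 => X ^ ((5 * (m + 2) + 5) / 3) + X ^ 3 * polyW m

lemma hasPoly_endCover_4_of_lt {m : ℕ} (hm : m < 2) :
    HasPoly (endCover 4 m) (X ^ ((5 * m + 5) / 3)) := by
  interval_cases m
  · convert hasPoly_endCover 4 0 [0, 1] (.left 6 (.dropRight 5 7 <| .dropRight 4 3 <| .cone 5)
      (.dropLeft 5 8 <| .dropPair 3 4 <| .dropPair 8 5 <| .finish)) (by decide +kernel) using 1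
    norm_num [ofList]
  · convert hasPoly_endCover 4 1 [0, 0, 0, 1] (.left 6 (.dropRight 5 7 <| .dropRight 4 3 <|
      .dropLeft 11 5 <| .dropLeft 8 5 <| .dropRight 6 10 <| .dropRight 3 7 <| .cone 3) (.dropLeft
      11 9 <| .dropRight 5 8 <| .dropLeft 5 8 <| .dropLeft 4 3 <| .dropPair 9 10 <| .dropPair 8 8
      <| .dropPair 3 4 <| .finish)) (by decide +kernel) using 1
    norm_num [ofList]
    ring

lemma hasPoly_endCover_6_of_lt {m : ℕ} (hm : m < 2) :
    HasPoly (endCover 6 m) (X ^ ((5 * m + 5) / 3)) := by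
  interval_cases m
  · convert hasPoly_endCover 6 0 [0, 1] (.left 7 (.dropRight 3 6 <| .dropRight 5 8 <| .cone 4)
      (.dropLeft 4 3 <| .dropPair 3 3 <| .dropPair 5 5 <| .finish)) (by decide +kernel) using 1
    norm_num [ofList]
  · convert hasPoly_endCover 6 1 [0, 0, 0, 1] (.left 7 (.dropRight 3 6 <| .dropRight 5 8 <|
      .dropLeft 3 4 <| .dropLeft 5 4 <| .dropRight 9 6 <| .dropRight 11 8 <| .cone 10) (.dropLeft
      6 3 <| .dropLeft 4 3 <| .dropRight 11 9 <| .dropLeft 5 8 <| .dropPair 10 9 <| .dropPair 3 3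
      <| .dropPair 8 5 <| .finish)) (by decide +kernel) using 1
    norm_num [ofList]
    ring

lemma hasPoly_endCover_7_of_lt {m : ℕ} (hm : m < 3) :
    HasPoly (endCover 7 m) (X ^ ((5 * m + 4) / 3)) := by
  interval_cases m
  · convert hasPoly_endCover 7 0 [0, 1] (.left 6 (.dropRight 8 6 <| .dropRight 5 3 <| .cone 8)
      (.dropLeft 8 7 <| .dropPair 7 8 <| .dropPair 4 5 <| .finish)) (by decide +kernel) using 1
    norm_num [ofList]
  · convert hasPoly_endCover 7 1 [0, 0, 0, 1] (.dropRight 4 3 <| .left 9 (.dropRight 11 9 <|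
      .dropLeft 7 11 <| .dropLeft 5 11 <| .dropRight 3 6 <| .dropPair 10 9 <| .dropPair 3 6 <|
      .dropPair 11 8 <| .dropPair 4 5 <| .finish) (.dropLeft 11 10 <| .dropLeft 5 7 <| .dropRight 3
      5 <| .cone 3)) (by decide +kernel) using 1
    norm_num [ofList]
    ring
  · convert hasPoly_endCover 7 2 [0, 0, 0, 0, 1] (.left 12 (.dropRight 14 12 <| .dropRight 7 9
      <| .dropLeft 10 14 <| .dropLeft 8 14 <| .dropRight 6 9 <| .dropRight 3 9 <| .dropRight 4 8
      <| .dropLeft 5 7 <| .cone 3) (.dropLeft 14 13 <| .dropRight 7 11 <| .dropLeft 8 10 <|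
      .dropRight 4 8 <| .dropLeft 3 6 <| .dropPair 13 14 <| .dropPair 10 11 <| .left 6 (.dropRight
      8 6 <| .dropRight 5 3 <| .cone 5) (.dropLeft 5 7 <| .dropPair 7 8 <| .dropPair 4 5 <|
      .finish))) (by decide +kernel) using 1
    norm_num [ofList]
    ring

lemma hasPoly_endCover_8_of_lt {m : ℕ} (hm : m < 3) :
    HasPoly (endCover 8 m) (X ^ ((5 * m + 4) / 3)) := by
  interval_cases m
  · convert hasPoly_endCover 8 0 [0, 1] (.left 6 (.dropRight 4 6 <| .dropRight 8 7 <| .cone 5)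
      (.dropLeft 5 8 <| .dropPair 8 8 <| .dropPair 3 4 <| .finish)) (by decide +kernel) using 1
    norm_num [ofList]
  · convert hasPoly_endCover 8 1 [0, 0, 0, 1] (.dropLeft 4 3 <| .left 9 (.dropRight 7 9 <|
      .dropRight 3 9 <| .dropRight 11 10 <| .dropLeft 5 8 <| .dropPair 6 9 <| .dropPair 11 10 <|
      .dropPair 3 4 <| .dropPair 8 5 <| .finish) (.dropLeft 8 11 <| .dropRight 3 7 <| .dropRight 4 5
      <| .cone 3)) (by decide +kernel) using 1
    norm_num [ofList]
    ring
  · convert hasPoly_endCover 8 2 [0, 0, 0, 0, 1] (.left 12 (.dropRight 10 12 <| .dropRight 6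
      12 <| .dropRight 14 13 <| .dropLeft 7 11 <| .dropLeft 8 11 <| .dropLeft 5 11 <| .dropRight 3
      7 <| .dropRight 7 5 <| .dropRight 4 5 <| .cone 6) (.dropLeft 11 14 <| .dropRight 6 10 <|
      .dropLeft 7 9 <| .dropRight 5 8 <| .dropLeft 4 6 <| .dropPair 14 14 <| .dropPair 9 10 <|
      .left 6 (.dropRight 8 7 <| .dropRight 4 3 <| .cone 5) (.dropLeft 5 8 <| .dropPair 8 8 <|
      .dropPair 3 4 <| .finish))) (by decide +kernel) using 1
    norm_num [ofList]
    ring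

lemma hasPoly_endCover_1_of_lt {m : ℕ} (hm : m < 5) :
    HasPoly (endCover 1 m) (polyU m) := by
  interval_cases m
  · convert hasPoly_endCover 1 0 [0, 2] (.left 7 (.dropRight 3 6 <| .dropRight 5 8 <|
      .dropPair 6 6 <| .dropPair 8 8 <| .dropPair 4 4 <| .finish) (.dropLeft 4 6 <| .dropPair 6 3 <|
      .dropPair 8 5 <| .finish)) (by decide +kernel) using 1
    norm_num [polyU, ofList]
    ring
  · convert hasPoly_endCover 1 1 [0, 0, 1, 1] (.dropRight 4 3 <| .left 10 (.dropRight 6 9 <|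
      .dropRight 8 11 <| .dropLeft 4 7 <| .dropPair 9 9 <| .dropPair 11 11 <| .dropPair 7 7 <|
      .dropPair 3 3 <| .dropPair 5 5 <| .finish) (.dropLeft 7 9 <| .dropLeft 3 9 <| .dropRight 5 3
      <| .dropLeft 5 11 <| .dropPair 9 6 <| .dropPair 11 8 <| .dropPair 4 3 <| .finish)) (by
      decide +kernel) using 1
    norm_num [polyU, ofList]
    ring
  · convert hasPoly_endCover 1 2 [0, 0, 0, 0, 3] (.left 13 (.dropRight 9 12 <| .dropRight 11
      14 <| .dropRight 7 10 <| .dropLeft 7 10 <| .dropRight 3 6 <| .dropRight 5 8 <| .dropLeft 3 6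
      <| .dropLeft 5 8 <| .dropPair 12 12 <| .dropPair 14 14 <| .dropPair 10 10 <| .dropPair 6 6
      <| .dropPair 8 8 <| .dropPair 4 4 <| .finish) (.dropLeft 10 12 <| .dropLeft 6 12 <| .dropRight
      4 6 <| .dropLeft 8 14 <| .dropPair 12 9 <| .dropPair 14 11 <| .left 7 (.dropRight 3 6 <|
      .dropRight 5 7 <| .dropPair 3 6 <| .dropPair 4 7 <| .dropPair 5 8 <| .finish) (.dropLeft 4 3
      <| .dropPair 3 3 <| .dropPair 5 5 <| .finish))) (by decide +kernel) using 1
    norm_num [polyU, ofList]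
    ring
  · convert hasPoly_endCover 1 3 [0, 0, 0, 0, 0, 1, 2] (.left 16 (.dropRight 12 15 <|
      .dropRight 14 17 <| .dropRight 10 13 <| .dropLeft 10 13 <| .dropRight 6 9 <| .dropRight 8 11
      <| .dropLeft 6 9 <| .dropRight 4 3 <| .dropLeft 8 11 <| .dropLeft 4 7 <| .dropPair 15 15 <|
      .dropPair 17 17 <| .dropPair 13 13 <| .dropPair 9 9 <| .dropPair 11 11 <| .dropPair 7 7 <|
      .dropPair 3 3 <| .dropPair 5 5 <| .finish) (.dropLeft 13 15 <| .dropLeft 9 15 <| .dropRight 7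
      9 <| .dropLeft 11 17 <| .dropPair 15 12 <| .dropPair 17 14 <| .left 7 (.dropRight 9 10 <|
      .dropRight 11 10 <| .dropRight 3 6 <| .dropRight 5 8 <| .dropLeft 3 6 <| .dropLeft 5 8 <|
      .dropPair 10 10 <| .dropPair 6 6 <| .dropPair 8 8 <| .dropPair 4 4 <| .finish) (.dropLeft 6 3
      <| .dropLeft 4 3 <| .dropRight 11 9 <| .dropLeft 5 8 <| .dropPair 10 9 <| .dropPair 3 3 <|
      .dropPair 8 5 <| .finish))) (by decide +kernel) using 1
    norm_num [polyU, ofList]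
    ring
  · convert hasPoly_endCover 1 4 [0, 0, 0, 0, 0, 0, 0, 3, 1] (.left 19 (.dropRight 15 18 <|
      .dropRight 17 20 <| .dropRight 13 16 <| .dropLeft 13 16 <| .dropRight 9 12 <| .dropRight 11
      14 <| .dropLeft 9 12 <| .dropLeft 11 14 <| .dropRight 7 10 <| .dropLeft 7 10 <| .dropRight 3
      6 <| .dropRight 5 8 <| .dropLeft 3 6 <| .dropLeft 5 8 <| .dropPair 18 18 <| .dropPair 20 20
      <| .dropPair 16 16 <| .dropPair 12 12 <| .dropPair 14 14 <| .dropPair 10 10 <| .dropPair 6 6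
      <| .dropPair 8 8 <| .dropPair 4 4 <| .finish) (.dropLeft 16 18 <| .dropLeft 12 18 <|
      .dropRight 10 12 <| .dropLeft 14 20 <| .dropPair 18 15 <| .dropPair 20 17 <| .left 13
      (.dropRight 9 12 <| .dropRight 6 12 <| .dropRight 11 13 <| .dropRight 7 13 <| .dropRight 8
      14 <| .dropLeft 3 6 <| .dropLeft 4 6 <| .dropLeft 5 7 <| .dropPair 9 12 <| .dropPair 10 13
      <| .dropPair 11 14 <| .dropPair 6 3 <| .dropPair 7 4 <| .dropPair 8 5 <| .finish) (.dropLeft 6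
      9 <| .dropRight 4 3 <| .dropLeft 8 11 <| .left 10 (.dropRight 6 9 <| .dropRight 8 11 <|
      .dropLeft 4 7 <| .dropPair 9 9 <| .dropPair 11 11 <| .dropPair 7 7 <| .dropPair 3 3 <|
      .dropPair 5 5 <| .finish) (.dropLeft 7 9 <| .dropLeft 3 9 <| .dropRight 5 3 <| .dropLeft 5 11
      <| .dropPair 9 6 <| .dropPair 11 8 <| .dropPair 4 3 <| .finish)))) (by decide +kernel) using 1
    norm_num [polyU, ofList]
    ring

lemma hasPoly_endCover_2_of_lt {m : ℕ} (hm : m < 5) :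
    HasPoly (endCover 2 m) (X * polyU m) := by
  interval_cases m
  · convert hasPoly_endCover 2 0 [0, 0, 2] (.left 6 (.dropRight 4 6 <| .dropLeft 8 4 <|
      .dropPair 3 6 <| .dropPair 4 7 <| .dropPair 5 8 <| .finish) (.dropLeft 5 8 <| .dropLeft 4 3 <|
      .dropPair 8 8 <| .dropPair 3 4 <| .finish)) (by decide +kernel) using 1
    norm_num [polyU, ofList]
    ring
  · convert hasPoly_endCover 2 1 [0, 0, 0, 1, 1] (.dropLeft 4 3 <| .left 6 (.dropRight 10 9 <|
      .dropRight 4 3 <| .dropLeft 8 11 <| .dropPair 9 9 <| .dropPair 11 11 <| .dropPair 7 7 <|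
      .dropPair 3 3 <| .dropPair 5 5 <| .finish) (.dropLeft 11 9 <| .dropLeft 7 9 <| .dropRight 5 11
      <| .dropLeft 5 3 <| .dropPair 9 10 <| .dropPair 8 11 <| .dropPair 3 4 <| .finish)) (by
      decide +kernel) using 1
    norm_num [polyU, ofList]
    ring
  · convert hasPoly_endCover 2 2 [0, 0, 0, 0, 0, 3] (.left 12 (.dropRight 10 12 <| .dropRight
      6 12 <| .dropLeft 4 6 <| .dropRight 8 5 <| .dropLeft 14 11 <| .dropRight 7 13 <| .dropLeft 3
      6 <| .dropLeft 5 7 <| .dropPair 9 12 <| .dropPair 10 13 <| .dropPair 11 14 <| .dropPair 6 3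
      <| .dropPair 7 4 <| .dropPair 8 5 <| .finish) (.dropLeft 11 14 <| .dropLeft 7 9 <| .dropRight
      5 8 <| .dropPair 14 14 <| .left 9 (.dropRight 7 10 <| .dropRight 3 6 <| .dropLeft 3 6 <|
      .dropLeft 5 8 <| .dropPair 10 10 <| .dropPair 6 6 <| .dropPair 8 8 <| .dropPair 4 4 <|
      .finish) (.dropLeft 6 10 <| .dropLeft 8 10 <| .dropLeft 4 10 <| .dropRight 4 8 <| .dropPair 10
      7 <| .dropPair 5 8 <| .dropPair 3 3 <| .finish))) (by decide +kernel) using 1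
    norm_num [polyU, ofList]
    ring
  · convert hasPoly_endCover 2 3 [0, 0, 0, 0, 0, 0, 1, 2] (.left 12 (.dropRight 16 15 <|
      .dropLeft 14 17 <| .dropRight 10 13 <| .dropLeft 10 13 <| .dropRight 6 9 <| .dropRight 8 11
      <| .dropLeft 6 9 <| .dropRight 4 3 <| .dropLeft 8 11 <| .dropLeft 4 7 <| .dropPair 15 15 <|
      .dropPair 17 17 <| .dropPair 13 13 <| .dropPair 9 9 <| .dropPair 11 11 <| .dropPair 7 7 <|
      .dropPair 3 3 <| .dropPair 5 5 <| .finish) (.dropLeft 17 15 <| .dropLeft 13 15 <| .dropRight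
      11 17 <| .dropLeft 7 9 <| .dropPair 15 16 <| .dropPair 14 17 <| .left 3 (.dropRight 7 3 <|
      .dropRight 5 4 <| .dropLeft 9 10 <| .dropLeft 11 10 <| .dropRight 3 6 <| .dropLeft 5 8 <|
      .dropPair 10 10 <| .dropPair 6 6 <| .dropPair 8 8 <| .dropPair 4 4 <| .finish) (.dropLeft 10 9
      <| .dropLeft 11 9 <| .dropRight 5 8 <| .dropLeft 8 6 <| .dropLeft 4 6 <| .dropPair 9 10 <|
      .dropPair 6 7 <| .dropPair 5 8 <| .finish))) (by decide +kernel) using 1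
    norm_num [polyU, ofList]
    ring
  · convert hasPoly_endCover 2 4 [0, 0, 0, 0, 0, 0, 0, 0, 3, 1] (.left 15 (.dropRight 19 18 <|
      .dropLeft 17 20 <| .dropRight 13 16 <| .dropLeft 13 16 <| .dropRight 9 12 <| .dropRight 11
      14 <| .dropLeft 9 12 <| .dropLeft 11 14 <| .dropRight 7 10 <| .dropLeft 7 10 <| .dropRight 3
      6 <| .dropRight 5 8 <| .dropLeft 3 6 <| .dropLeft 5 8 <| .dropPair 18 18 <| .dropPair 20 20
      <| .dropPair 16 16 <| .dropPair 12 12 <| .dropPair 14 14 <| .dropPair 10 10 <| .dropPair 6 6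
      <| .dropPair 8 8 <| .dropPair 4 4 <| .finish) (.dropLeft 20 18 <| .dropLeft 16 18 <|
      .dropRight 14 20 <| .dropLeft 10 12 <| .dropPair 18 19 <| .dropPair 17 20 <| .left 6
      (.dropRight 4 3 <| .dropLeft 8 5 <| .left 12 (.dropRight 10 9 <| .dropRight 6 9 <| .dropLeft
      14 13 <| .dropRight 8 11 <| .dropLeft 4 7 <| .dropPair 13 13 <| .dropPair 9 9 <| .dropPair
      11 11 <| .dropPair 7 7 <| .dropPair 3 3 <| .dropPair 5 5 <| .finish) (.dropLeft 9 13 <|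
      .dropLeft 11 13 <| .dropLeft 7 13 <| .dropRight 3 6 <| .dropRight 5 7 <| .dropPair 13 10 <|
      .dropPair 14 11 <| .dropPair 3 6 <| .dropPair 4 7 <| .dropPair 5 8 <| .finish)) (.dropLeft 13
      12 <| .dropLeft 14 12 <| .dropRight 8 11 <| .dropLeft 11 9 <| .dropLeft 7 9 <| .dropRight 5
      11 <| .dropLeft 4 3 <| .dropLeft 5 3 <| .dropPair 12 13 <| .dropPair 9 10 <| .dropPair 8 11
      <| .dropPair 3 4 <| .finish))) (by decide +kernel) using 1
    norm_num [polyU, ofList]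
    ring

lemma hasPoly_endCover_3_of_lt {m : ℕ} (hm : m < 4) :
    HasPoly (endCover 3 m) (polyW m) := by
  interval_cases m
  · convert hasPoly_endCover 3 0 [0, 2] (.left 7 (.dropRight 3 6 <| .dropRight 5 7 <|
      .dropPair 3 6 <| .dropPair 4 7 <| .dropPair 5 8 <| .finish) (.dropLeft 4 3 <| .dropPair 3 3 <|
      .dropPair 5 5 <| .finish)) (by decide +kernel) using 1
    norm_num [polyW, ofList]
    ring
  · convert hasPoly_endCover 3 1 [0, 0, 0, 2] (.left 7 (.dropRight 9 10 <| .dropRight 11 10 <|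
      .dropRight 3 6 <| .dropRight 5 8 <| .dropLeft 3 6 <| .dropLeft 5 8 <| .dropPair 10 10 <|
      .dropPair 6 6 <| .dropPair 8 8 <| .dropPair 4 4 <| .finish) (.dropLeft 6 3 <| .dropLeft 4 3 <|
      .dropRight 11 9 <| .dropLeft 5 8 <| .dropPair 10 9 <| .dropPair 3 3 <| .dropPair 8 5 <|
      .finish)) (by decide +kernel) using 1
    norm_num [polyW, ofList]
    ring
  · convert hasPoly_endCover 3 2 [0, 0, 0, 0, 2, 1] (.left 13 (.dropRight 9 12 <| .dropRight 6
      12 <| .dropRight 11 13 <| .dropRight 7 13 <| .dropRight 8 14 <| .dropLeft 3 6 <| .dropLeft 4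
      6 <| .dropLeft 5 7 <| .dropPair 9 12 <| .dropPair 10 13 <| .dropPair 11 14 <| .dropPair 6 3
      <| .dropPair 7 4 <| .dropPair 8 5 <| .finish) (.dropLeft 6 9 <| .dropRight 4 3 <| .dropLeft 8
      11 <| .left 10 (.dropRight 6 9 <| .dropRight 8 11 <| .dropLeft 4 7 <| .dropPair 9 9 <|
      .dropPair 11 11 <| .dropPair 7 7 <| .dropPair 3 3 <| .dropPair 5 5 <| .finish) (.dropLeft 7 9
      <| .dropLeft 3 9 <| .dropRight 5 3 <| .dropLeft 5 11 <| .dropPair 9 6 <| .dropPair 11 8 <|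
      .dropPair 4 3 <| .finish))) (by decide +kernel) using 1
    norm_num [polyW, ofList]
    ring
  · convert hasPoly_endCover 3 3 [0, 0, 0, 0, 0, 0, 3] (.left 13 (.dropRight 15 16 <|
      .dropRight 17 16 <| .dropRight 9 12 <| .dropRight 11 14 <| .dropLeft 9 12 <| .dropLeft 11 14
      <| .dropRight 7 10 <| .dropLeft 7 10 <| .dropRight 3 6 <| .dropRight 5 8 <| .dropLeft 3 6 <|
      .dropLeft 5 8 <| .dropPair 16 16 <| .dropPair 12 12 <| .dropPair 14 14 <| .dropPair 10 10 <|
      .dropPair 6 6 <| .dropPair 8 8 <| .dropPair 4 4 <| .finish) (.dropLeft 6 9 <| .dropRight 4 3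
      <| .dropLeft 8 11 <| .left 12 (.dropRight 17 15 <| .dropLeft 10 14 <| .dropLeft 11 14 <|
      .dropRight 6 9 <| .dropLeft 4 3 <| .dropRight 8 7 <| .dropPair 16 15 <| .dropPair 9 9 <|
      .dropPair 14 11 <| .dropPair 7 7 <| .dropPair 3 3 <| .dropPair 5 5 <| .finish) (.dropLeft 14
      16 <| .dropLeft 7 9 <| .dropLeft 3 9 <| .dropRight 7 3 <| .dropRight 5 3 <| .dropLeft 11 10
      <| .dropPair 16 17 <| .dropPair 10 11 <| .dropPair 9 6 <| .dropPair 5 8 <| .dropPair 4 3 <|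
      .finish))) (by decide +kernel) using 1
    norm_num [polyW, ofList]
    ring

lemma hasPoly_endCover_5_of_lt {m : ℕ} (hm : m < 4) :
    HasPoly (endCover 5 m) (X * polyW m) := by
  interval_cases m
  · convert hasPoly_endCover 5 0 [0, 0, 2] (.left 6 (.dropRight 4 3 <| .dropLeft 8 7 <|
      .dropPair 7 7 <| .dropPair 3 3 <| .dropPair 5 5 <| .finish) (.dropLeft 3 7 <| .dropLeft 5 7 <|
      .dropPair 7 4 <| .dropPair 8 5 <| .finish)) (by decide +kernel) using 1
    norm_num [polyW, ofList]
    ring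
  · convert hasPoly_endCover 5 1 [0, 0, 0, 0, 2] (.left 3 (.dropRight 7 3 <| .dropRight 5 4 <|
      .dropLeft 9 10 <| .dropLeft 11 10 <| .dropRight 3 6 <| .dropLeft 5 8 <| .dropPair 10 10 <|
      .dropPair 6 6 <| .dropPair 8 8 <| .dropPair 4 4 <| .finish) (.dropLeft 10 9 <| .dropLeft 11 9
      <| .dropRight 5 8 <| .dropLeft 8 6 <| .dropLeft 4 6 <| .dropPair 9 10 <| .dropPair 6 7 <|
      .dropPair 5 8 <| .finish)) (by decide +kernel) using 1
    norm_num [polyW, ofList]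
    ring
  · convert hasPoly_endCover 5 2 [0, 0, 0, 0, 0, 2, 1] (.left 6 (.dropRight 4 3 <| .dropLeft 8
      5 <| .left 12 (.dropRight 10 9 <| .dropRight 6 9 <| .dropLeft 14 13 <| .dropRight 8 11 <|
      .dropLeft 4 7 <| .dropPair 13 13 <| .dropPair 9 9 <| .dropPair 11 11 <| .dropPair 7 7 <|
      .dropPair 3 3 <| .dropPair 5 5 <| .finish) (.dropLeft 9 13 <| .dropLeft 11 13 <| .dropLeft 7
      13 <| .dropRight 3 6 <| .dropRight 5 7 <| .dropPair 13 10 <| .dropPair 14 11 <| .dropPair 3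
      6 <| .dropPair 4 7 <| .dropPair 5 8 <| .finish)) (.dropLeft 13 12 <| .dropLeft 14 12 <|
      .dropRight 8 11 <| .dropLeft 11 9 <| .dropLeft 7 9 <| .dropRight 5 11 <| .dropLeft 4 3 <|
      .dropLeft 5 3 <| .dropPair 12 13 <| .dropPair 9 10 <| .dropPair 8 11 <| .dropPair 3 4 <|
      .finish)) (by decide +kernel) using 1
    norm_num [polyW, ofList]
    ring
  · convert hasPoly_endCover 5 3 [0, 0, 0, 0, 0, 0, 0, 3] (.left 15 (.dropRight 9 12 <| .left
      17 (.dropRight 13 16 <| .dropRight 11 14 <| .dropLeft 9 12 <| .dropLeft 11 14 <| .dropRight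
      7 10 <| .dropLeft 7 10 <| .dropRight 3 6 <| .dropRight 5 8 <| .dropLeft 3 6 <| .dropLeft 5 8
      <| .dropPair 16 16 <| .dropPair 12 12 <| .dropPair 14 14 <| .dropPair 10 10 <| .dropPair 6 6
      <| .dropPair 8 8 <| .dropPair 4 4 <| .finish) (.dropLeft 12 16 <| .dropLeft 14 16 <| .dropLeft
      10 16 <| .dropRight 10 12 <| .dropRight 6 12 <| .dropRight 8 11 <| .dropLeft 8 11 <|
      .dropRight 4 5 <| .dropLeft 4 6 <| .dropLeft 6 7 <| .dropPair 9 12 <| .dropPair 16 13 <|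
      .dropPair 11 11 <| .dropPair 7 7 <| .dropPair 3 3 <| .dropPair 5 5 <| .finish)) (.dropLeft 12
      16 <| .dropLeft 14 16 <| .dropLeft 10 16 <| .dropRight 6 9 <| .dropRight 8 11 <| .dropLeft
      11 17 <| .dropRight 7 11 <| .dropRight 5 11 <| .dropLeft 4 3 <| .dropLeft 7 5 <| .dropLeft 3
      5 <| .dropRight 9 10 <| .dropPair 16 13 <| .dropPair 17 14 <| .dropPair 9 10 <| .dropPair 8
      11 <| .dropPair 6 3 <| .dropPair 5 4 <| .finish)) (by decide +kernel) using 1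
    norm_num [polyW, ofList]
    ring

lemma hasPoly_endCover_4_8 (m : ℕ) : HasPoly (endCover 4 m) (X ^ ((5 * m + 5) / 3)) ∧
    HasPoly (endCover 8 m) (X ^ ((5 * m + 4) / 3)) := by
  induction m using Nat.strong_induction_on with
  | _ m ih =>
    constructor
    · rcases lt_or_ge m 2 with h | h
      · exact hasPoly_endCover_4_of_lt h
      · obtain ⟨m, rfl⟩ := Nat.exists_eq_add_of_le' h
        convert hasPoly_endCover_4 (ih (m + 1) (by omega)).2 using 1
        rw [← pow_add]
        congr 1
        omega
    · rcases lt_or_ge m 3 with h | h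
      · exact hasPoly_endCover_8_of_lt h
      · obtain ⟨m, rfl⟩ := Nat.exists_eq_add_of_le' h
        convert hasPoly_endCover_8 (ih (m + 1) (by omega)).1 using 1
        rw [← pow_add]
        congr 1
        omega

lemma hasPoly_endCover_6_7 (m : ℕ) : HasPoly (endCover 6 m) (X ^ ((5 * m + 5) / 3)) ∧
    HasPoly (endCover 7 m) (X ^ ((5 * m + 4) / 3)) := by
  induction m using Nat.strong_induction_on with
  | _ m ih =>
    constructor
    · rcases lt_or_ge m 2 with h | h
      · exact hasPoly_endCover_6_of_lt h
      · obtain ⟨m, rfl⟩ := Nat.exists_eq_add_of_le' h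
        convert hasPoly_endCover_6 (ih (m + 1) (by omega)).2 using 1
        rw [← pow_add]
        congr 1
        omega
    · rcases lt_or_ge m 3 with h | h
      · exact hasPoly_endCover_7_of_lt h
      · obtain ⟨m, rfl⟩ := Nat.exists_eq_add_of_le' h
        convert hasPoly_endCover_7 (ih (m + 1) (by omega)).1 using 1
        rw [← pow_add]
        congr 1
        omega

lemma hasPoly_endCover_1_2_3_5 (m : ℕ) :
    (HasPoly (endCover 1 m) (polyU m) ∧ HasPoly (endCover 2 m) (X * polyU m)) ∧
      HasPoly (endCover 3 m) (polyW m) ∧ HasPoly (endCover 5 m) (X * polyW m) := by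
  induction m using Nat.strong_induction_on with
  | _ m ih =>
    constructor
    · rcases lt_or_ge m 5 with h | h
      · exact ⟨hasPoly_endCover_1_of_lt h, hasPoly_endCover_2_of_lt h⟩
      obtain ⟨m, rfl⟩ := Nat.exists_eq_add_of_le' h
      obtain ⟨h₁, h₂⟩ := (ih (m + 3) (by omega)).1
      obtain ⟨h₃, h₅⟩ := (ih (m + 3) (by omega)).2
      obtain ⟨h₃', h₅'⟩ := (ih (m + 1) (by omega)).2
      have e : (5 * (m + 5) + 4) / 3 = (5 * (m + 3) + 5) / 3 + 3 := by omega
      constructor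
      · convert hasPoly_endCover_1 (hasPoly_endCover_6_7 (m + 5)).2 h₂ h₅' h₃ ?_ using 1
        · rw [polyU]
          ring
        · rw [polyW, e]
          ring
      · convert hasPoly_endCover_2 (hasPoly_endCover_4_8 (m + 5)).2 h₁ h₃' h₅ ?_ using 1
        · rw [polyU]
          ring
        · rw [polyW, e]
          ring
    · rcases lt_or_ge m 4 with h | h
      · exact ⟨hasPoly_endCover_3_of_lt h, hasPoly_endCover_5_of_lt h⟩
      obtain ⟨m, rfl⟩ := Nat.exists_eq_add_of_le' h
      obtain ⟨h₃, h₅⟩ := (ih (m + 2) (by omega)).2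
      obtain ⟨h₁, h₂⟩ := (ih (m + 3) (by omega)).1
      obtain ⟨h₁', h₂'⟩ := (ih (m + 1) (by omega)).1
      have e : (5 * (m + 4) + 5) / 3 = (5 * (m + 3) + 4) / 3 + 2 := by omega
      constructor
      · convert hasPoly_endCover_3 (hasPoly_endCover_6_7 (m + 4)).1 h₅ h₂' h₁ ?_ using 1
        · rw [polyW]
          ring
        · rw [polyU, e]
          ring
      · convert hasPoly_endCover_5 (hasPoly_endCover_4_8 (m + 4)).1 h₃ h₁' h₂ ?_ using 1
        · rw [polyW]
          ring
        · rw [polyU, e]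
          ring

/-- The Poincaré polynomial of the covering complex of the grid with `m + 4` columns. -/
noncomputable def polyGrid (m : ℕ) : ℕ[X] := X ^ 2 * polyU (m + 2) + X ^ 5 * polyW m

theorem hasPoly_endCover_0_add_two (m : ℕ) : HasPoly (endCover 0 (m + 2)) (polyGrid m) := by
  cases m with
  | zero =>
    convert hasPoly_endCover 0 2 [0, 0, 0, 0, 0, 0, 5] (.left 12 (.dropRight 10 12 <| .left 13
      (.dropRight 9 12 <| .dropRight 6 12 <| .dropRight 11 13 <| .dropLeft 4 6 <| .dropRight 8 5
      <| .dropLeft 14 11 <| .dropRight 7 13 <| .dropLeft 3 6 <| .dropLeft 5 7 <| .dropPair 9 12 <|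
      .dropPair 10 13 <| .dropPair 11 14 <| .dropPair 6 3 <| .dropPair 7 4 <| .dropPair 8 5 <|
      .finish) (.dropLeft 10 14 <| .dropLeft 11 14 <| .dropLeft 8 14 <| .dropRight 6 9 <| .dropRight
      4 8 <| .dropLeft 6 9 <| .dropLeft 4 3 <| .dropRight 8 7 <| .dropPair 9 9 <| .dropPair 14 11
      <| .dropPair 7 7 <| .dropPair 3 3 <| .dropPair 5 5 <| .finish)) (.dropLeft 11 13 <| .dropLeft
      7 9 <| .dropRight 5 8 <| .left 13 (.dropRight 11 14 <| .dropPair 14 14 <| .left 9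
      (.dropRight 7 10 <| .dropRight 3 6 <| .dropLeft 3 6 <| .dropLeft 5 8 <| .dropPair 10 10 <|
      .dropPair 6 6 <| .dropPair 8 8 <| .dropPair 4 4 <| .finish) (.dropLeft 6 10 <| .dropLeft 8 10
      <| .dropLeft 4 10 <| .dropRight 4 8 <| .dropPair 10 7 <| .dropPair 5 8 <| .dropPair 3 3 <|
      .finish)) (.dropLeft 10 14 <| .dropLeft 8 14 <| .dropRight 3 7 <| .dropRight 4 8 <| .dropLeft
      6 9 <| .dropLeft 3 9 <| .dropPair 14 11 <| .dropPair 9 6 <| .dropPair 4 7 <| .dropPair 5 8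
      <| .finish))) (by decide +kernel) using 1
    norm_num [polyGrid, polyU, polyW, ofList]
    ring
  | succ m =>
    obtain ⟨-, h₃, h₅⟩ := hasPoly_endCover_1_2_3_5 (m + 1)
    convert hasPoly_endCover_0 (hasPoly_endCover_1_2_3_5 (m + 3)).1.2 h₃
      (hasPoly_endCover_4_8 (m + 3)).1 (hasPoly_endCover_1_2_3_5 (m + 3)).2.2 ?_ using 1
    · rw [polyGrid]
      ring
    · rw [polyW]
      ring

theorem hasPoly_endCover_0_0 : HasPoly (endCover 0 0) (ofList [0, 0, 0, 3]) :=
  hasPoly_endCover 0 0 [0, 0, 0, 3] (.left 6 (.dropRight 4 6 <| .dropLeft 8 5 <| .left 7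
    (.dropRight 3 6 <| .dropRight 5 7 <| .dropPair 3 6 <| .dropPair 4 7 <| .dropPair 5 8 <| .finish)
    (.dropLeft 4 3 <| .dropPair 3 3 <| .dropPair 5 5 <| .finish)) (.dropLeft 5 7 <| .dropLeft 7 3 <|
    .dropLeft 4 3 <| .dropRight 5 8 <| .dropPair 8 8 <| .dropPair 3 4 <| .finish)) (by
    decide +kernel)

theorem hasPoly_endCover_0_1 : HasPoly (endCover 0 1) (ofList [0, 0, 0, 0, 1, 2]) :=
  hasPoly_endCover 0 1 [0, 0, 0, 0, 1, 2] (.left 10 (.dropRight 6 9 <| .dropRight 8 11 <|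
    .dropLeft 4 3 <| .left 6 (.dropRight 10 9 <| .dropRight 4 3 <| .dropLeft 8 11 <| .dropPair 9 9
    <| .dropPair 11 11 <| .dropPair 7 7 <| .dropPair 3 3 <| .dropPair 5 5 <| .finish) (.dropLeft 11
    9 <| .dropLeft 7 9 <| .dropRight 5 11 <| .dropLeft 5 3 <| .dropPair 9 10 <| .dropPair 8 11 <|
    .dropPair 3 4 <| .finish)) (.dropLeft 6 9 <| .dropLeft 7 9 <| .dropLeft 3 9 <| .dropRight 4 3 <|
    .dropRight 5 3 <| .dropLeft 8 11 <| .dropLeft 5 11 <| .dropPair 9 6 <| .dropPair 11 8 <|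
    .dropPair 4 3 <| .finish)) (by decide +kernel)

theorem hasPoly_one_column : HasPoly (gridCover 0 56 56) (ofList [0, 1]) :=
  hasPoly_gridCover_zero (.dropRight 4 3 <| .dropLeft 4 3 <| .dropPair 3 3 <| .dropPair 5 5 <|
    .finish) (by decide +kernel)

/-- An injective linear map induces an isomorphism between a subquotient and its image. -/
noncomputable def subquotientEquiv {M N : Type*} [AddCommGroup M] [AddCommGroup N]
    (f : M →ₗ[ℤ] N) (hf : Function.Injective f) {Z B : Submodule ℤ M} {Z₁ B₁ : Submodule ℤ N}
    (hZ : Z.map f = Z₁) (hB : B.map f = B₁) :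
    (Z ⧸ B.submoduleOf Z) ≃ₗ[ℤ] (Z₁ ⧸ B₁.submoduleOf Z₁) :=
  Submodule.Quotient.equiv _ _
    ((Submodule.equivMapOfInjective f hf Z).trans (LinearEquiv.ofEq _ _ hZ)) <| by
    subst hZ hB
    ext ⟨y, hy⟩
    constructor
    · rintro ⟨x, hx, h⟩
      exact ⟨x, hx, congrArg Subtype.val h⟩
    · rintro ⟨x, hx, h : f x = y⟩
      obtain ⟨z, hz, h'⟩ := hy
      obtain rfl : z = x := hf (h'.trans h.symm)
      exact ⟨⟨z, hz⟩, hx, Subtype.ext h⟩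

section Transport

variable {W : Type} [DecidableEq V] {K : Cplx V} {L : LowerSet (Set W)} {φ : V → W}

/-- The chain map induced by a map of vertices. -/
noncomputable def push (K : Cplx V) (φ : V → W) (k : ℕ) :
    (Smpx K k →₀ ℤ) →ₗ[ℤ] Chain W (k + 1) :=
  Finsupp.lmapDomain ℤ ℤ fun f => φ ∘ f.1

lemma push_injective (hφ : φ.Injective) (k : ℕ) : Function.Injective (push K φ k) :=
  Finsupp.mapDomain_injective fun _ _ h => Subtype.ext (hφ.comp_left h)

lemma push_range (hK : ∀ σ, K.faces σ ↔ φ '' σ ∈ L) (hL : ∀ s ∈ L, s ⊆ Set.range φ) (k : ℕ) :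
    LinearMap.range (push K φ k) = chains L (k + 1) := by
  rw [LinearMap.range_eq_map, ← Finsupp.supported_univ, push, Finsupp.lmapDomain_supported, chains]
  congr 1
  ext g
  simp only [Set.image_univ, Set.mem_range, Set.mem_ofPred_eq]
  constructor
  · rintro ⟨f, rfl⟩
    have := (hK _).1 f.2
    rwa [Finset.coe_image, Finset.coe_univ, Set.image_univ, ← Set.range_comp] at this
  · intro hg
    choose f hf using fun j => hL _ hg (Set.mem_range_self j)
    obtain rfl : φ ∘ f = g := funext hf
    refine ⟨⟨f, (hK _).2 ?_⟩, rfl⟩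
    rwa [Finset.coe_image, Finset.coe_univ, Set.image_univ, ← Set.range_comp]

lemma bd_push (k : ℕ) (c : Smpx K (k + 1) →₀ ℤ) :
    bd (k + 1) (push K φ (k + 1) c) = push K φ k (bdry K ℤ k c) := by
  induction c using Finsupp.induction_linear with
  | zero => simp
  | add f g hf hg => simp [hf, hg]
  | single f a =>
    simp only [push, bdry, Finsupp.lmapDomain_apply, Finsupp.mapDomain_single, bd_single, faceSum,
      Finsupp.linearCombination_single, Finsupp.mapDomain_smul, Finsupp.mapDomain_finsetSum]
    rfl

/-- The identification of the chains on the empty simplex. -/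
noncomputable def pushEmpty (W : Type) : (Unit →₀ ℤ) ≃ₗ[ℤ] Chain W 0 :=
  Finsupp.domLCongr (Equiv.ofUnique Unit (Fin 0 → W))

lemma bd_zero_push (c : Smpx K 0 →₀ ℤ) :
    bd 0 (push K φ 0 c) = pushEmpty W (aug K ℤ c) := by
  induction c using Finsupp.induction_linear with
  | zero => simp
  | add f g hf hg => simp [hf, hg]
  | single f a =>
    simp [push, aug, faceSum, pushEmpty, Subsingleton.elim _ (default : Fin 0 → W)]

lemma map_push_bdry_range (hK : ∀ σ, K.faces σ ↔ φ '' σ ∈ L) (hL : ∀ s ∈ L, s ⊆ Set.range φ)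
    (k : ℕ) : (LinearMap.range (bdry K ℤ k)).map (push K φ k) = bounds L (k + 1) := by
  rw [bounds, ← push_range hK hL, ← LinearMap.range_comp, ← LinearMap.range_comp]
  congr 1
  exact LinearMap.ext fun c => (bd_push k c).symm

lemma map_push_cyc (hφ : φ.Injective) (hK : ∀ σ, K.faces σ ↔ φ '' σ ∈ L)
    (hL : ∀ s ∈ L, s ⊆ Set.range φ) (k : ℕ) :
    (cyc K ℤ k).map (push K φ k) = cycles L (k + 1) := by
  have key (c) : c ∈ cyc K ℤ k ↔ push K φ k c ∈ bdKer (k + 1) := by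
    cases k with
    | zero => simp [cyc, bdKer, bd_zero_push]
    | succ k =>
      simp only [cyc, bdKer, LinearMap.mem_ker, bd_push]
      exact (map_eq_zero_iff _ (push_injective hφ k)).symm
  rw [cycles, ← push_range hK hL]
  ext y
  constructor
  · rintro ⟨c, hc, rfl⟩
    exact ⟨⟨c, rfl⟩, (key c).1 hc⟩
  · rintro ⟨⟨c, rfl⟩, hc⟩
    exact ⟨c, (key c).2 hc, rfl⟩

/-- Reduced homology of a complex is the homology of its image under an embedding of vertices. -/
noncomputable def reducedHomologyEquiv (hφ : φ.Injective) (hK : ∀ σ, K.faces σ ↔ φ '' σ ∈ L)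
    (hL : ∀ s ∈ L, s ⊆ Set.range φ) (k : ℕ) :
    reducedHomology K ℤ (k : ℤ) ≃ₗ[ℤ] Homol L (k + 1) :=
  subquotientEquiv (push K φ k) (push_injective hφ k) (map_push_cyc hφ hK hL k)
    (map_push_bdry_range hK hL k)

lemma map_pushEmpty_aug_range (hK : ∀ σ, K.faces σ ↔ φ '' σ ∈ L)
    (hL : ∀ s ∈ L, s ⊆ Set.range φ) :
    (LinearMap.range (aug K ℤ)).map (pushEmpty W : (Unit →₀ ℤ) →ₗ[ℤ] Chain W 0) = bounds L 0 := by
  rw [bounds, ← push_range hK hL, ← LinearMap.range_comp, ← LinearMap.range_comp]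
  congr 1
  exact LinearMap.ext fun c => (bd_zero_push c).symm

lemma subsingleton_reducedHomology_neg_one (hK : ∀ σ, K.faces σ ↔ φ '' σ ∈ L)
    (hL : ∀ s ∈ L, s ⊆ Set.range φ) (h : Subsingleton (Homol L 0)) (h0 : ∅ ∈ L) :
    Subsingleton (reducedHomology K ℤ (-1)) := by
  change Subsingleton ((Unit →₀ ℤ) ⧸ LinearMap.range (aug K ℤ))
  rw [Submodule.Quotient.subsingleton_iff]
  apply Submodule.map_injective_of_injective (pushEmpty W).injective
  have := Submodule.Quotient.subsingleton_iff.1 h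
  rw [map_pushEmpty_aug_range hK hL, Submodule.map_top, LinearEquiv.range, eq_top_iff]
  intro c _
  have hc : c ∈ cycles L 0 := ⟨mem_chains.2 fun f _ => by rwa [Set.range_eq_empty f], trivial⟩
  exact (this ▸ Submodule.mem_top : (⟨c, hc⟩ : cycles L 0) ∈ (bounds L 0).submoduleOf (cycles L 0))

end Transport

/-- Subsets of the columns `1, …, n` of the grid whose complement is dominating. -/
def domCover (n : ℕ) : LowerSet (Set ℕ) :=
  cover gridRel {v | 3 ≤ v ∧ v < 3 * (n + 1)} {v | 3 ≤ v ∧ v < 3 * (n + 1)}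

lemma endCover_zero (m : ℕ) : endCover 0 m = domCover (m + 2) := by
  have : strip (m + 1) 63 = {v | 3 ≤ v ∧ v < 3 * (m + 2 + 1)} := by
    ext v
    rw [mem_strip]
    simp only [Set.mem_ofPred_eq]
    rw [show 63 = 2 ^ 6 - 1 from rfl, Nat.testBit_two_pow_sub_one, decide_eq_true_iff]
    omega
  rw [endCover, gridCover, domCover, ← this]
  rfl

lemma gridCover_one_column : gridCover 0 56 56 = domCover 1 := by
  have : strip 0 56 = {v | 3 ≤ v ∧ v < 3 * (1 + 1)} := by
    ext v
    rw [mem_strip, show 56 = (2 ^ 3 - 1) <<< 3 from rfl]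
    simp only [Set.mem_ofPred_eq, Nat.testBit_shiftLeft, Nat.testBit_two_pow_sub_one,
      Bool.and_eq_true, decide_eq_true_iff]
    omega
  rw [gridCover, domCover, ← this]

/-- The position of a vertex of `P_n × P_3` in the grid. -/
def gridPos {n : ℕ} (v : Fin n × Fin 3) : ℕ := 3 * (v.1 + 1) + v.2

lemma gridPos_injective (n : ℕ) : Function.Injective (gridPos (n := n)) := by
  rintro ⟨⟨a, ha⟩, ⟨b, hb⟩⟩ ⟨⟨c, hc⟩, ⟨d, hd⟩⟩ h
  simp only [gridPos] at h
  simp only [Prod.mk.injEq, Fin.mk.injEq]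
  omega

lemma range_gridPos (n : ℕ) :
    Set.range (gridPos (n := n)) = {v | 3 ≤ v ∧ v < 3 * (n + 1)} := by
  ext v
  simp only [Set.mem_range, Set.mem_ofPred_eq]
  constructor
  · rintro ⟨⟨⟨a, ha⟩, ⟨b, hb⟩⟩, rfl⟩
    simp only [gridPos]
    omega
  · rintro ⟨h₁, h₂⟩
    exact ⟨⟨⟨v / 3 - 1, by omega⟩, ⟨v % 3, by omega⟩⟩, by simp only [gridPos]; omega⟩

lemma gridRel_gridPos {n : ℕ} (v w : Fin n × Fin 3) :
    gridRel (gridPos w) (gridPos v) ↔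
      w = v ∨ ((SimpleGraph.pathGraph n).boxProd (SimpleGraph.pathGraph 3)).Adj w v := by
  obtain ⟨⟨a, ha⟩, ⟨b, hb⟩⟩ := v
  obtain ⟨⟨c, hc⟩, ⟨d, hd⟩⟩ := w
  simp only [gridRel, gridPos, SimpleGraph.boxProd_adj, SimpleGraph.pathGraph_adj,
    Prod.mk.injEq, Fin.mk.injEq]
  omega

lemma domCpx_faces_iff {n : ℕ} (σ : Finset (Fin n × Fin 3)) :
    (domCpx ((SimpleGraph.pathGraph n).boxProd (SimpleGraph.pathGraph 3))).faces σ ↔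
      gridPos '' (σ : Set (Fin n × Fin 3)) ∈ domCover n := by
  rw [domCover, ← range_gridPos, mem_cover]
  simp only [Set.image_subset_range, true_and, Set.forall_mem_range, Set.exists_range_iff,
    gridRel_gridPos, (gridPos_injective n).mem_set_image, Finset.mem_coe]
  exact forall_congr' fun v => exists_congr fun w => and_comm

lemma empty_mem_domCover (n : ℕ) : ∅ ∈ domCover n :=
  ⟨Set.empty_subset _, fun y hy => ⟨y, hy, Or.inl rfl, id⟩⟩

section

variable {n : ℕ} {p : ℕ[X]} {i : ℤ}

lemma nonempty_Hdp_equiv (h : HasPoly (domCover n) p) {k b : ℕ} (hi : i = k)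
    (hb : p.coeff (k + 1) = b) : Nonempty (Hdp n i ≃ₗ[ℤ] (Fin b → ℤ)) := by
  subst hi hb
  obtain ⟨h₁, h₂, h₃⟩ := h (k + 1)
  have e : Hdp n k ≃ₗ[ℤ] Homol (domCover n) (k + 1) :=
    reducedHomologyEquiv (gridPos_injective n) domCpx_faces_iff
      (fun s hs => by rw [range_gridPos]; exact hs.1) k
  exact ⟨e.trans (Module.finBasisOfFinrankEq ℤ _ h₃).equivFun⟩

lemma subsingleton_Hdp (h : HasPoly (domCover n) p) (h0 : p.coeff 0 = 0)
    (hi : ∀ k : ℕ, i = k → p.coeff (k + 1) = 0) : Subsingleton (Hdp n i) := by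
  match i, hi with
  | Int.ofNat k, hi =>
    exact (nonempty_Hdp_equiv h rfl (hi k rfl)).some.toEquiv.subsingleton
  | Int.negSucc 0, _ =>
    exact subsingleton_reducedHomology_neg_one domCpx_faces_iff
      (fun s hs => by rw [range_gridPos]; exact hs.1) (h.subsingleton h0) (empty_mem_domCover n)
  | Int.negSucc (_ + 1), _ => exact inferInstanceAs (Subsingleton PUnit)

end

lemma polyU_add_six (m : ℕ) : polyU (m + 6) = X ^ ((5 * m + 1) / 3 + 11) +
    X ^ (5 * m / 3 + 11) + X ^ ((5 * m + 2) / 3 + 10) + X ^ 9 * polyU m := by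
  rw [polyU, polyU, polyU, show (5 * (m + 4 + 2) + 4) / 3 = (5 * m + 1) / 3 + 11 by omega,
    show (5 * (m + 2 + 2) + 4) / 3 = 5 * m / 3 + 8 by omega,
    show (5 * (m + 2) + 4) / 3 = (5 * m + 2) / 3 + 4 by omega]
  ring

lemma polyW_add_six (m : ℕ) : polyW (m + 6) = X ^ ((5 * m + 2) / 3 + 11) +
    X ^ ((5 * m + 1) / 3 + 11) + X ^ (5 * m / 3 + 11) + X ^ 9 * polyW m := by
  rw [polyW, polyW, polyW, show (5 * (m + 4 + 2) + 5) / 3 = (5 * m + 2) / 3 + 11 by omega,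
    show (5 * (m + 2 + 2) + 5) / 3 = (5 * m + 1) / 3 + 8 by omega,
    show (5 * (m + 2) + 5) / 3 = 5 * m / 3 + 5 by omega]
  ring

lemma polyGrid_add_six (m : ℕ) : polyGrid (m + 6) = X ^ 9 * polyGrid m +
    2 * (X ^ ((5 * m + 2) / 3 + 16) + X ^ ((5 * m + 1) / 3 + 16) + X ^ (5 * m / 3 + 16)) := by
  rw [polyGrid, show m + 6 + 2 = m + 2 + 6 by ring, polyU_add_six, polyW_add_six, polyGrid,
    show (5 * (m + 2) + 1) / 3 = (5 * m + 2) / 3 + 3 by omega,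
    show 5 * (m + 2) / 3 = (5 * m + 1) / 3 + 3 by omega,
    show (5 * (m + 2) + 2) / 3 = 5 * m / 3 + 4 by omega]
  ring

/-- The Betti numbers `b, 6, …, 6, c` spread over the degrees `9 * m + l, …, 10 * m + l + 1`. -/
def betti (b c l m k : ℕ) : ℕ :=
  if k = 9 * m + l then b else if 9 * m + l < k ∧ k < 10 * m + l + 1 then 6
  else if k = 10 * m + l + 1 then c else 0

lemma coeff_eq_betti {P : ℕ → ℕ[X]} {b c d l : ℕ} (hcd : c + d = 6)
    (zero : P 0 = C b * X ^ l + C c * X ^ (l + 1))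
    (succ : ∀ m, P (m + 1) = X ^ 9 * P m +
      X ^ (10 * m) * (C c * X ^ (l + 11) + C d * X ^ (l + 10))) (m k : ℕ) :
    (P m).coeff k = betti b c l m k := by
  induction m generalizing k with
  | zero =>
    rw [zero, coeff_add, coeff_C_mul_X_pow, coeff_C_mul_X_pow]
    simp only [betti]
    split_ifs <;> omega
  | succ m ih =>
    rw [succ, coeff_add, coeff_X_pow_mul', coeff_X_pow_mul', coeff_add, coeff_C_mul_X_pow,
      coeff_C_mul_X_pow, ih]
    simp only [betti]
    split_ifs <;> omega

lemma polyGrid_six_mul_add (m r : ℕ) : polyGrid (6 * (m + 1) + r) = X ^ 9 * polyGrid (6 * m + r) +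
    X ^ (10 * m) * (2 * (X ^ ((5 * r + 2) / 3 + 16) + X ^ ((5 * r + 1) / 3 + 16) +
      X ^ (5 * r / 3 + 16))) := by
  rw [show 6 * (m + 1) + r = 6 * m + r + 6 by ring, polyGrid_add_six,
    show (5 * (6 * m + r) + 2) / 3 = 10 * m + (5 * r + 2) / 3 by omega,
    show (5 * (6 * m + r) + 1) / 3 = 10 * m + (5 * r + 1) / 3 by omega,
    show (5 * (6 * m + r)) / 3 = 10 * m + 5 * r / 3 by omega]
  ring

lemma coeff_polyGrid {b c d l r : ℕ} (hcd : c + d = 6)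
    (zero : polyGrid r = C b * X ^ l + C c * X ^ (l + 1))
    (succ : 2 * (X ^ ((5 * r + 2) / 3 + 16) + X ^ ((5 * r + 1) / 3 + 16) + X ^ (5 * r / 3 + 16)) =
      (C c * X ^ (l + 11) + C d * X ^ (l + 10) : ℕ[X])) (m k : ℕ) :
    (polyGrid (6 * m + r)).coeff k = betti b c l m k :=
  coeff_eq_betti (P := fun m => polyGrid (6 * m + r)) hcd (by simpa using zero)
    (fun m => by rw [polyGrid_six_mul_add, succ]) m k

lemma coeff_polyGrid_zero (m k : ℕ) : (polyGrid (6 * m)).coeff k = betti 5 0 6 m k := by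
  refine coeff_polyGrid (d := 6) (r := 0) rfl ?_ ?_ m k
  · simp [polyGrid, polyU, polyW]
    ring
  · simp
    ring

lemma coeff_polyGrid_one (m k : ℕ) : (polyGrid (6 * m + 1)).coeff k = betti 1 4 7 m k := by
  refine coeff_polyGrid (d := 2) rfl ?_ ?_ m k
  · simp [polyGrid, polyU, polyW]
    ring
  · simp
    ring

lemma coeff_polyGrid_two (m k : ℕ) : (polyGrid (6 * m + 2)).coeff k = betti 5 2 9 m k := by
  refine coeff_polyGrid (d := 4) rfl ?_ ?_ m k
  · simp [polyGrid, polyU, polyW]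
    ring
  · simp
    ring

lemma coeff_polyGrid_four (m k : ℕ) : (polyGrid (6 * m + 4)).coeff k = betti 5 4 12 m k := by
  refine coeff_polyGrid (d := 2) rfl ?_ ?_ m k
  · simp [polyGrid, polyU, polyW]
    ring
  · simp
    ring

/-- The Poincaré polynomials for `6 * m + 1` columns. -/
noncomputable def polyOne : ℕ → ℕ[X]
  | 0 => ofList [0, 1]
  | m + 1 => polyGrid (6 * m + 3)

/-- The Poincaré polynomials for `6 * m + 3` columns. -/
noncomputable def polyThree : ℕ → ℕ[X]
  | 0 => ofList [0, 0, 0, 0, 1, 2]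
  | m + 1 => polyGrid (6 * m + 5)

lemma coeff_polyOne (m k : ℕ) : (polyOne m).coeff k = betti 1 0 1 m k := by
  refine coeff_eq_betti (d := 6) rfl ?_ (fun m => ?_) m k
  · simp [polyOne, ofList]
  · rcases m with _ | m
    · simp [polyOne, polyGrid, polyU, polyW, ofList]
      ring
    · rw [polyOne, polyOne, polyGrid_six_mul_add]
      simp
      ring

lemma coeff_polyThree (m k : ℕ) : (polyThree m).coeff k = betti 1 2 4 m k := by
  refine coeff_eq_betti (d := 4) rfl ?_ (fun m => ?_) m k
  · simp [polyThree, ofList]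
    ring
  · rcases m with _ | m
    · simp [polyThree, polyGrid, polyU, polyW, ofList]
      ring
    · rw [polyThree, polyThree, polyGrid_six_mul_add]
      simp
      ring

lemma hasPoly_domCover_add_four (m : ℕ) : HasPoly (domCover (m + 4)) (polyGrid m) :=
  endCover_zero (m + 2) ▸ hasPoly_endCover_0_add_two m

lemma hasPoly_domCover_polyOne : ∀ m, HasPoly (domCover (6 * m + 1)) (polyOne m)
  | 0 => gridCover_one_column ▸ hasPoly_one_column
  | m + 1 => hasPoly_domCover_add_four (6 * m + 3)

lemma hasPoly_domCover_polyThree : ∀ m, HasPoly (domCover (6 * m + 3)) (polyThree m)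
  | 0 => endCover_zero 1 ▸ hasPoly_endCover_0_1
  | m + 1 => hasPoly_domCover_add_four (6 * m + 5)

lemma hasPoly_domCover_two : HasPoly (domCover 2) (ofList [0, 0, 0, 3]) :=
  endCover_zero 0 ▸ hasPoly_endCover_0_0

lemma coeff_two_columns (k : ℕ) : (ofList [0, 0, 0, 3]).coeff k = betti 3 0 3 0 k := by
  have : ofList [0, 0, 0, 3] = C 3 * X ^ 3 := by
    simp [ofList]
    ring
  rw [this, coeff_C_mul_X_pow]
  simp only [betti]
  split_ifs <;> omega

/-- Reading off the homology in degree `i` from the Betti numbers. -/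
lemma Hdp_of_betti {n b c l m : ℕ} {p : ℕ[X]} (h : HasPoly (domCover n) p)
    (hp : ∀ k, p.coeff k = betti b c (l + 1) m k) (i : ℤ) :
    (i = 10 * m + l + 1 → Nonempty (Hdp n i ≃ₗ[ℤ] (Fin c → ℤ))) ∧
    (9 * m + l < i ∧ i < 10 * m + l + 1 → Nonempty (Hdp n i ≃ₗ[ℤ] (Fin 6 → ℤ))) ∧
    (i = 9 * m + l → Nonempty (Hdp n i ≃ₗ[ℤ] (Fin b → ℤ))) ∧
    (¬(i = 10 * m + l + 1 ∧ c ≠ 0) → ¬(9 * m + l < i ∧ i < 10 * m + l + 1) → i ≠ 9 * m + l →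
      Subsingleton (Hdp n i)) := by
  have key (hi : 0 ≤ i) {d : ℕ} (hd : betti b c (l + 1) m (i.toNat + 1) = d) :
      Nonempty (Hdp n i ≃ₗ[ℤ] (Fin d → ℤ)) :=
    nonempty_Hdp_equiv h (Int.toNat_of_nonneg hi).symm ((hp _).trans hd)
  refine ⟨fun hi => key (by omega) ?_, fun hi => key (by omega) ?_, fun hi => key (by omega) ?_,
    fun h₁ h₂ h₃ => subsingleton_Hdp h ((hp 0).trans ?_) fun k hk => (hp _).trans ?_⟩ <;>
  · simp only [betti]
    split_ifs <;> first | contradiction | omega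

end OrderedHomology

/-- Theorem 6.12: the reduced integral homology groups of `D(P_n × P_3)`. -/
theorem homology_dominance_PnP3 :
    (∀ m : ℕ, 1 ≤ m → ∀ i : ℤ,
      (i = 10 * (m : ℤ) - 1 → Nonempty (Hdp (6 * m) i ≃ₗ[ℤ] (Fin 2 → ℤ))) ∧
      (9 * (m : ℤ) - 1 < i ∧ i < 10 * (m : ℤ) - 1 →
        Nonempty (Hdp (6 * m) i ≃ₗ[ℤ] (Fin 6 → ℤ))) ∧
      (i = 9 * (m : ℤ) - 1 → Nonempty (Hdp (6 * m) i ≃ₗ[ℤ] (Fin 5 → ℤ))) ∧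
      (i ≠ 10 * (m : ℤ) - 1 → ¬(9 * (m : ℤ) - 1 < i ∧ i < 10 * (m : ℤ) - 1) →
        i ≠ 9 * (m : ℤ) - 1 → Subsingleton (Hdp (6 * m) i))) ∧
    (∀ m : ℕ, ∀ i : ℤ,
      (9 * (m : ℤ) < i ∧ i ≤ 10 * (m : ℤ) →
        Nonempty (Hdp (6 * m + 1) i ≃ₗ[ℤ] (Fin 6 → ℤ))) ∧
      (i = 9 * (m : ℤ) → Nonempty (Hdp (6 * m + 1) i ≃ₗ[ℤ] ℤ)) ∧
      (¬(9 * (m : ℤ) < i ∧ i ≤ 10 * (m : ℤ)) → i ≠ 9 * (m : ℤ) →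
        Subsingleton (Hdp (6 * m + 1) i))) ∧
    (∀ m : ℕ, 1 ≤ m → ∀ i : ℤ,
      (i = 10 * (m : ℤ) + 2 → Nonempty (Hdp (6 * m + 2) i ≃ₗ[ℤ] (Fin 4 → ℤ))) ∧
      (9 * (m : ℤ) + 2 < i ∧ i < 10 * (m : ℤ) + 2 →
        Nonempty (Hdp (6 * m + 2) i ≃ₗ[ℤ] (Fin 6 → ℤ))) ∧
      (i = 9 * (m : ℤ) + 2 → Nonempty (Hdp (6 * m + 2) i ≃ₗ[ℤ] (Fin 5 → ℤ))) ∧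
      (i ≠ 10 * (m : ℤ) + 2 → ¬(9 * (m : ℤ) + 2 < i ∧ i < 10 * (m : ℤ) + 2) →
        i ≠ 9 * (m : ℤ) + 2 → Subsingleton (Hdp (6 * m + 2) i))) ∧
    (∀ i : ℤ,
      (i = 2 → Nonempty (Hdp 2 i ≃ₗ[ℤ] (Fin 3 → ℤ))) ∧
      (i ≠ 2 → Subsingleton (Hdp 2 i))) ∧
    (∀ m : ℕ, ∀ i : ℤ,
      (i = 10 * (m : ℤ) + 4 → Nonempty (Hdp (6 * m + 3) i ≃ₗ[ℤ] (Fin 2 → ℤ))) ∧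
      (9 * (m : ℤ) + 3 < i ∧ i < 10 * (m : ℤ) + 4 →
        Nonempty (Hdp (6 * m + 3) i ≃ₗ[ℤ] (Fin 6 → ℤ))) ∧
      (i = 9 * (m : ℤ) + 3 → Nonempty (Hdp (6 * m + 3) i ≃ₗ[ℤ] ℤ)) ∧
      (i ≠ 10 * (m : ℤ) + 4 → ¬(9 * (m : ℤ) + 3 < i ∧ i < 10 * (m : ℤ) + 4) →
        i ≠ 9 * (m : ℤ) + 3 → Subsingleton (Hdp (6 * m + 3) i))) ∧
    (∀ m : ℕ, ∀ i : ℤ,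
      (9 * (m : ℤ) + 5 < i ∧ i ≤ 10 * (m : ℤ) + 5 →
        Nonempty (Hdp (6 * m + 4) i ≃ₗ[ℤ] (Fin 6 → ℤ))) ∧
      (i = 9 * (m : ℤ) + 5 → Nonempty (Hdp (6 * m + 4) i ≃ₗ[ℤ] (Fin 5 → ℤ))) ∧
      (¬(9 * (m : ℤ) + 5 < i ∧ i ≤ 10 * (m : ℤ) + 5) → i ≠ 9 * (m : ℤ) + 5 →
        Subsingleton (Hdp (6 * m + 4) i))) ∧
    (∀ m : ℕ, ∀ i : ℤ,
      (i = 10 * (m : ℤ) + 7 → Nonempty (Hdp (6 * m + 5) i ≃ₗ[ℤ] (Fin 4 → ℤ))) ∧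
      (9 * (m : ℤ) + 6 < i ∧ i < 10 * (m : ℤ) + 7 →
        Nonempty (Hdp (6 * m + 5) i ≃ₗ[ℤ] (Fin 6 → ℤ))) ∧
      (i = 9 * (m : ℤ) + 6 → Nonempty (Hdp (6 * m + 5) i ≃ₗ[ℤ] ℤ)) ∧
      (i ≠ 10 * (m : ℤ) + 7 → ¬(9 * (m : ℤ) + 6 < i ∧ i < 10 * (m : ℤ) + 7) →
        i ≠ 9 * (m : ℤ) + 6 → Subsingleton (Hdp (6 * m + 5) i))) := by
  refine ⟨fun m hm i => ?_, fun m i => ?_, fun m hm i => ?_, fun i => ?_, fun m i => ?_,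
    fun m i => ?_, fun m i => ?_⟩
  · obtain ⟨m, rfl⟩ := Nat.exists_eq_add_of_le' hm
    obtain ⟨h₁, h₂, h₃, h₄⟩ := OrderedHomology.Hdp_of_betti (l := 8)
      (OrderedHomology.hasPoly_domCover_add_four (6 * m + 2))
      (OrderedHomology.coeff_polyGrid_two m) i
    push_cast at *
    exact ⟨fun h => h₁ (by omega), fun h => h₂ (by omega), fun h => h₃ (by omega),
      fun _ _ _ => h₄ (by omega) (by omega) (by omega)⟩
  · obtain ⟨-, h₂, h₃, h₄⟩ := OrderedHomology.Hdp_of_betti (l := 0)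
      (OrderedHomology.hasPoly_domCover_polyOne m) (OrderedHomology.coeff_polyOne m) i
    exact ⟨fun h => h₂ (by omega),
      fun h => (h₃ (by omega)).map fun e => e.trans (LinearEquiv.funUnique (Fin 1) ℤ ℤ),
      fun _ _ => h₄ (by omega) (by omega) (by omega)⟩
  · obtain ⟨m, rfl⟩ := Nat.exists_eq_add_of_le' hm
    obtain ⟨h₁, h₂, h₃, h₄⟩ := OrderedHomology.Hdp_of_betti (l := 11)
      (OrderedHomology.hasPoly_domCover_add_four (6 * m + 4))
      (OrderedHomology.coeff_polyGrid_four m) i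
    push_cast at *
    exact ⟨fun h => h₁ (by omega), fun h => h₂ (by omega), fun h => h₃ (by omega),
      fun _ _ _ => h₄ (by omega) (by omega) (by omega)⟩
  · obtain ⟨-, -, h₃, h₄⟩ := OrderedHomology.Hdp_of_betti (m := 0) (b := 3) (c := 0) (l := 2)
      OrderedHomology.hasPoly_domCover_two OrderedHomology.coeff_two_columns i
    exact ⟨fun h => h₃ (by omega), fun _ => h₄ (by omega) (by omega) (by omega)⟩
  · obtain ⟨h₁, h₂, h₃, h₄⟩ := OrderedHomology.Hdp_of_betti (l := 3)
      (OrderedHomology.hasPoly_domCover_polyThree m) (OrderedHomology.coeff_polyThree m) i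
    exact ⟨fun h => h₁ (by omega), fun h => h₂ (by omega),
      fun h => (h₃ (by omega)).map fun e => e.trans (LinearEquiv.funUnique (Fin 1) ℤ ℤ),
      fun _ _ _ => h₄ (by omega) (by omega) (by omega)⟩
  · obtain ⟨-, h₂, h₃, h₄⟩ := OrderedHomology.Hdp_of_betti (l := 5)
      (OrderedHomology.hasPoly_domCover_add_four (6 * m)) (OrderedHomology.coeff_polyGrid_zero m) i
    exact ⟨fun h => h₂ (by omega), fun h => h₃ (by omega),
      fun _ _ => h₄ (by omega) (by omega) (by omega)⟩
  · obtain ⟨h₁, h₂, h₃, h₄⟩ := OrderedHomology.Hdp_of_betti (l := 6)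
      (OrderedHomology.hasPoly_domCover_add_four (6 * m + 1))
      (OrderedHomology.coeff_polyGrid_one m) i
    exact ⟨fun h => h₁ (by omega), fun h => h₂ (by omega),
      fun h => (h₃ (by omega)).map fun e => e.trans (LinearEquiv.funUnique (Fin 1) ℤ ℤ),
      fun _ _ _ => h₄ (by omega) (by omega) (by omega)⟩
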